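/- Let λ ∈ (0, 1/2]. Let f : ℝ → ℝ be C² with f'(0) ≥ 0, with f'' globally Lipschitz, and with |f''| uniformly bounded on ℝ. Let u₀ : [0,∞) → ℝ be locally absolutely continuous with u₀(0) = 0, u₀'(0) = 0, and ∫_K |u₀'(x)|^{1/λ} dx < ∞ for every compact K ⊂ [0,∞). Then there exists a weak solution u : [0,∞) × [0,∞) → ℝ of equation (E1) with these data; that is: u is continuous, u(0,t) = 0 for all t ≥ 0, u(x,0) = u₀(x) for all x ≥ 0, for every t ≥ 0 the function u(·,t) is locally absolutely continuous in x with ∫_K |u_x(x,t)|^{1/λ} dx < ∞ on every compact K ⊂ [0,∞) (hence u(·,t) is locally Hölder continuous in x with exponent 1−λ), and for every test function φ ∈ C¹ with compact support contained in (0,∞) × (0,∞) one has ∫₀^∞ ∫₀^∞ { −u_x (φ_t + f'(u) φ_x) + (λ−1) f''(u) (u_x)² φ } dx dt = 0. -/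

import Mathlib

/-!
Write `p = 1/λ ≥ 2`, `F = f'`, `g = f''`. The solution is built along characteristics `X(ξ,t)`,
`X_t = F(u)`. There the slope satisfies the Riccati equation `d/dt u_x = -λ g(u) u_x²`, so
`u_x = w / S` with `w` constant in time and `S = s₀ + λ w A`, `A(ξ,t) = ∫₀ᵗ g(U(ξ,τ)) dτ`. With
`X_ξ = |S|^p`, the solution `U(ξ,t) = u(X(ξ,t),t)` has `U_ξ = w |S|^(p-2) S`, and the system closes
into a fixed-point equation for `A` alone, in which `S` is free to change sign. Since `g` is bounded
and Lipschitz, Picard iteration solves it for all times, and `A` depends on `ξ` with an explicit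
modulus of continuity.

To return to `(x,t)`, the map `X(·,t)` must be onto `ℝ` for every `t`. Starting with `s₀ = 1`
everywhere could fail, as `S` may vanish on a whole half line of labels at once. For this reason the
initial labels are interleaved with *rarefaction labels* of initial strain `0`: each unit block of
labels is cut into small cells, the first half of a cell carries the initial data with strain `1`,
and the second half copies the values of `w` from the first half with strain `0`. The initial
function is not changed, but the strains of a label and of its copy differ by almost `1` at later
times, by the modulus of continuity of `A`. If the cells of the `k`-th block are small enough, that
block therefore keeps length at least `4^(-p)` for `|t| ≤ k`, and `X(ξ,t) → ∞`.

Given surjectivity, `u(X(ξ,t),t) = U(ξ,t)` defines a continuous function, because `U` is constant on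
labels sharing a position. Its slope is in `L^p_loc`, since `∫ |u_x|^p dx ≤ ∫ |w|^p dξ`. The labels
`ξ < 0` carry the zero solution, and as `F(0) ≥ 0` they occupy `x ≤ F(0) t`, which gives the
boundary condition. Finally, the weak formulation becomes, by the change of variables `x = X(ξ,t)`,
the integral over `ξ` of `-∫ d/dt [w |S|^(p-2) S φ(X,t)] dt = 0`. At times with `S = 0` this uses
that `S_t = λ w g(U)` vanishes almost everywhere on `{S = 0}`, which matters when `p = 2`.
-/

open Real Set MeasureTheory

/-- Partial derivative in the spatial direction `x` (first coordinate). -/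
noncomputable def px (φ : ℝ × ℝ → ℝ) (p : ℝ × ℝ) : ℝ := fderiv ℝ φ p (1, 0)

/-- Partial derivative in the time direction `t` (second coordinate). -/
noncomputable def pt (φ : ℝ × ℝ → ℝ) (p : ℝ × ℝ) : ℝ := fderiv ℝ φ p (0, 1)

open Filter Topology
open scoped ENNReal NNReal

/-! ### Odd powers -/

/-- The `(p-1)`-homogeneous odd power `s ↦ |s|^(p-2) s`, i.e. the derivative of `|s|^p / p`. It
expresses the slope density `u_x X_ξ` through the strain without dividing by the strain. -/
noncomputable def oddPow (p s : ℝ) : ℝ := |s| ^ (p - 2) * s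

lemma continuous_abs_rpow {q : ℝ} (hq : 0 ≤ q) : Continuous fun s : ℝ => |s| ^ q :=
  continuous_abs.rpow_const fun _ => Or.inr hq

lemma abs_rpow_eq_mul_sq (p : ℝ) {s : ℝ} (hs : s ≠ 0) : |s| ^ p = |s| ^ (p - 2) * s ^ 2 := by
  rw [← sq_abs, ← rpow_natCast |s| 2, ← rpow_add (abs_pos.2 hs)]
  norm_num

lemma abs_oddPow {p : ℝ} (hp : p ≠ 1) (s : ℝ) : |oddPow p s| = |s| ^ (p - 1) := by
  rcases eq_or_ne s 0 with rfl | hs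
  · simp [oddPow, zero_rpow (sub_ne_zero.2 hp)]
  · rw [oddPow, abs_mul, abs_of_nonneg (by positivity), ← rpow_add_one (abs_ne_zero.2 hs)]
    ring_nf

lemma hasDerivAt_oddPow_zero {p : ℝ} (hp : 2 ≤ p) :
    HasDerivAt (oddPow p) ((p - 1) * |(0 : ℝ)| ^ (p - 2)) 0 := by
  have value : (p - 1) * |(0 : ℝ)| ^ (p - 2) = |(0 : ℝ)| ^ (p - 2) := by
    rcases hp.eq_or_lt with rfl | h
    · norm_num
    · simp [zero_rpow (sub_ne_zero.2 h.ne')]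
  rw [hasDerivAt_iff_tendsto_slope, value]
  refine (((continuous_abs_rpow (sub_nonneg.2 hp)).tendsto 0).mono_left
    nhdsWithin_le_nhds).congr' ?_
  filter_upwards [self_mem_nhdsWithin] with x hx
  have hx : x ≠ 0 := hx
  simp [slope_def_field, oddPow, hx]

lemma hasDerivAt_oddPow {p : ℝ} (hp : 2 ≤ p) (s : ℝ) :
    HasDerivAt (oddPow p) ((p - 1) * |s| ^ (p - 2)) s := by
  rcases eq_or_ne s 0 with rfl | hs
  · exact hasDerivAt_oddPow_zero hp
  have hpow := (hasDerivAt_abs hs).rpow_const (p := p - 2) (Or.inl (abs_ne_zero.2 hs))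
  refine (hpow.mul (hasDerivAt_id s)).congr_deriv ?_
  have hsplit : |s| ^ (p - 2) = |s| ^ (p - 2 - 1) * |s| := by
    rw [← rpow_add_one (abs_ne_zero.2 hs), sub_add_cancel]
  have hsign : (SignType.sign s : ℝ) * s = |s| := sign_mul_self s
  simp only [id]
  rw [hsplit]
  linear_combination ((p - 2) * |s| ^ (p - 2 - 1)) * hsign

lemma continuous_oddPow {p : ℝ} (hp : 2 ≤ p) : Continuous (oddPow p) :=
  continuous_iff_continuousAt.2 fun s => (hasDerivAt_oddPow hp s).continuousAt

lemma abs_oddPow_sub_le {p : ℝ} (hp : 2 ≤ p) {a b B : ℝ} (ha : |a| ≤ B) (hb : |b| ≤ B) :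
    |oddPow p a - oddPow p b| ≤ (p - 1) * B ^ (p - 2) * |a - b| := by
  refine (convex_Icc (-B) B).norm_image_sub_le_of_norm_hasDerivWithin_le
    (fun x _ => (hasDerivAt_oddPow hp x).hasDerivWithinAt) (fun x hx => ?_)
    (abs_le.1 hb) (abs_le.1 ha)
  have hxB : |x| ≤ B := abs_le.2 hx
  rw [norm_eq_abs, abs_of_nonneg (mul_nonneg (by linarith) (by positivity))]
  gcongr
  linarith

lemma abs_rpow_mul_div (p w s : ℝ) : |s| ^ p * (w / s) = w * oddPow p s := by
  rcases eq_or_ne s 0 with rfl | hs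
  · simp [oddPow]
  · rw [abs_rpow_eq_mul_sq p hs, oddPow]
    field_simp

lemma abs_rpow_mul_div_sq (p w : ℝ) {s : ℝ} (hs : s ≠ 0) :
    |s| ^ p * (w / s) ^ 2 = w ^ 2 * |s| ^ (p - 2) := by
  rw [abs_rpow_eq_mul_sq p hs]
  field_simp

/-! ### Moduli of continuity, chain rule and zero sets -/

lemma continuous_uncurry_of_modulus {α β γ E : Type*} [TopologicalSpace α] [TopologicalSpace β]
    [PseudoMetricSpace γ] [PseudoMetricSpace E] {F : α → β → E} {C : β → ℝ} {G : α → γ}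
    (hC : Continuous C) (hG : Continuous G) (hF : ∀ ξ, Continuous (F ξ))
    (hmod : ∀ ξ η t, dist (F ξ t) (F η t) ≤ C t * dist (G ξ) (G η)) :
    Continuous (Function.uncurry F) := by
  refine continuous_iff_continuousAt.2 fun ⟨η, t₀⟩ => tendsto_iff_dist_tendsto_zero.2 ?_
  have hbound : Continuous fun q : α × β =>
      C q.2 * dist (G q.1) (G η) + dist (F η q.2) (F η t₀) := by
    have := hF η
    fun_prop
  refine squeeze_zero (fun _ => dist_nonneg) (fun q => ?_)
    (by simpa using hbound.tendsto (η, t₀))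
  exact (dist_triangle _ (F η q.2) _).trans (add_le_add_left (hmod _ _ _) _)

lemma isProperMap_prodMk_snd_of_monotone {T : Type*} [TopologicalSpace T] {X : ℝ → T → ℝ}
    (hX : Continuous (Function.uncurry X)) (hmono : ∀ t, Monotone fun ξ => X ξ t)
    (hsurj : ∀ t, Function.Surjective fun ξ => X ξ t) :
    IsProperMap fun q : ℝ × T => (X q.1 q.2, q.2) := by
  have hcont : Continuous fun q : ℝ × T => (X q.1 q.2, q.2) := hX.prodMk continuous_snd
  refine isProperMap_iff_ultrafilter.2 ⟨hcont, fun 𝒰 ⟨x, t⟩ h𝒰 => ?_⟩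
  obtain ⟨hx, ht⟩ := (Prod.tendsto_iff _ _).1 h𝒰
  obtain ⟨a, ha⟩ := hsurj t (x - 1)
  obtain ⟨b, hb⟩ := hsurj t (x + 1)
  have hXc : ∀ c, Tendsto (fun q : ℝ × T => X c q.2) 𝒰 (𝓝 (X c t)) := fun c =>
    ((hX.comp (Continuous.prodMk_right c)).tendsto t).comp ht
  have hmem : ∀ᶠ q : ℝ × T in 𝒰, q.1 ∈ Icc a b := by
    filter_upwards [(hXc a).eventually_lt hx (by linarith),
      hx.eventually_lt (hXc b) (by linarith)] with q hqa hqb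
    exact ⟨((hmono q.2).reflect_lt hqa).le, ((hmono q.2).reflect_lt hqb).le⟩
  obtain ⟨ξ, -, hξ⟩ := (isCompact_Icc (a := a) (b := b)).ultrafilter_le_nhds
    (𝒰.map Prod.fst) (le_principal_iff.2 hmem)
  have hlim : Tendsto (fun q : ℝ × T => q) 𝒰 (𝓝 (ξ, t)) :=
    (show Tendsto Prod.fst (𝒰 : Filter (ℝ × T)) (𝓝 ξ) from hξ).prodMk_nhds ht
  exact ⟨(ξ, t), Prod.ext (tendsto_nhds_unique ((hX.tendsto (ξ, t)).comp hlim) hx) rfl, hlim⟩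

lemma tendsto_atTop_of_add_le_add_one {X : ℝ → ℝ} (hX : Monotone X) {c : ℝ} (hc : 0 < c)
    (h : ∀ᶠ k : ℕ in atTop, X k + c ≤ X (k + 1)) : Tendsto X atTop atTop := by
  obtain ⟨N, hN⟩ := eventually_atTop.1 h
  have hlow : ∀ j : ℕ, X N + j * c ≤ X ((N + j : ℕ) : ℝ) := by
    intro j
    induction j with
    | zero => simp
    | succ j ih =>
      have := hN (N + j) (N.le_add_right j)
      push_cast at this ih ⊢
      rw [← add_assoc]
      linarith
  refine hX.tendsto_atTop_atTop fun x => ?_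
  obtain ⟨j, hj⟩ := exists_nat_ge ((x - X N) / c)
  refine ⟨_, le_trans ?_ (hlow j)⟩
  rw [div_le_iff₀ hc] at hj
  linarith

lemma abs_intervalIntegral_le_rpow {p a b : ℝ} (hp : 1 < p) {v : ℝ → ℝ}
    (hv : MemLp v (ENNReal.ofReal p) (volume.restrict (uIoc a b))) :
    |∫ x in a..b, v x| ≤ (∫ x in uIoc a b, |v x| ^ p) ^ (1 / p) * |b - a| ^ (1 - 1 / p) := by
  have hconj : p.HolderConjugate (1 / (1 - 1 / p)) := by
    rw [Real.holderConjugate_iff]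
    exact ⟨hp, by simp⟩
  have : IsFiniteMeasure (volume.restrict (uIoc a b)) := by
    rw [uIoc]
    infer_instance
  have hHolder := integral_mul_le_Lp_mul_Lq_of_nonneg hconj (f := fun x => |v x|)
    (g := fun _ => (1 : ℝ)) (ae_of_all _ fun x => abs_nonneg _) (ae_of_all _ fun _ => zero_le_one)
    hv.norm (memLp_const 1)
  simp only [mul_one, one_rpow, setIntegral_const, smul_eq_mul, measureReal_def,
    volume_uIoc, ENNReal.toReal_ofReal (abs_nonneg _), one_div_one_div] at hHolder
  rw [intervalIntegral.abs_integral_eq_abs_integral_uIoc]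
  exact abs_integral_le_integral_abs.trans hHolder

lemma abs_integral_sub_primitive_le {φ k : ℝ → ℝ} {c : ℝ} (hc : 0 ≤ c)
    (hk : ∀ a b, IntervalIntegrable k volume a b) {a b : ℝ}
    (hφ : ∀ y ∈ uIoc a b, |φ y| ≤ c * k y) :
    |∫ y in a..b, φ y| ≤ c * |(∫ y in (0 : ℝ)..b, k y) - ∫ y in (0 : ℝ)..a, k y| := by
  have := intervalIntegral.norm_integral_le_abs_of_norm_le (f := φ)
    ((ae_restrict_iff' measurableSet_uIoc).2 (ae_of_all volume hφ)) ((hk a b).const_mul c)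
  rwa [intervalIntegral.integral_const_mul, abs_mul, abs_of_nonneg hc,
    ← intervalIntegral.integral_interval_sub_left (hk 0 b) (hk 0 a)] at this

lemma absolutelyContinuousOnInterval_comp_of_lipschitz {X Y : Type*} [PseudoMetricSpace X]
    [PseudoMetricSpace Y] {F : X → Y} {U : ℝ → X} {K : ℝ≥0} {a b : ℝ} (hF : LipschitzWith K F)
    (hU : AbsolutelyContinuousOnInterval U a b) :
    AbsolutelyContinuousOnInterval (F ∘ U) a b := by
  refine squeeze_zero (fun _ => Finset.sum_nonneg fun _ _ => dist_nonneg) (fun E => ?_)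
    (by simpa using Tendsto.const_mul (K : ℝ) hU)
  rw [Finset.mul_sum]
  exact Finset.sum_le_sum fun _ _ => hF.dist_le_mul _ _

lemma integral_comp_primitive {F g k : ℝ → ℝ} {K : ℝ≥0} (hF : ∀ a, HasDerivAt F (g a) a)
    (hLip : LipschitzWith K F) (hk : ∀ a b, IntervalIntegrable k volume a b) (a b : ℝ) :
    ∫ η in a..b, g (∫ y in a..η, k y) * k η = F (∫ y in a..b, k y) - F 0 := by
  have hac := absolutelyContinuousOnInterval_comp_of_lipschitz hLip
    ((hk a b).absolutelyContinuousOnInterval_intervalIntegral (c := a) left_mem_uIcc)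
  have hFTC := hac.integral_deriv_eq_sub
  simp only [Function.comp_apply, intervalIntegral.integral_same] at hFTC
  rw [← hFTC]
  refine intervalIntegral.integral_congr_ae ?_
  filter_upwards [(hk a b).ae_hasDerivAt_integral] with x hx hxab
  exact ((hF _).comp x (hx (uIoc_subset_uIcc hxab) a left_mem_uIcc)).deriv.symm

lemma ae_hasDerivAt_eq_zero_of_eq_zero {E : Type*} [NormedAddCommGroup E] [NormedSpace ℝ E]
    {S S' : ℝ → E} (hS : ∀ t, HasDerivAt S (S' t) t) : ∀ᵐ t, S t = 0 → S' t = 0 := by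
  set Z : Set ℝ := {t | S t = 0}
  have isolated : {x ∈ Z | 𝓝[Z ∩ Ioi x] x = ⊥}.Countable :=
    countable_setOfPred_isolated_right_within
  filter_upwards [isolated.ae_notMem volume] with t ht h0
  have : (𝓝[Z ∩ Ioi t] t).NeBot := ⟨fun hbot => ht ⟨h0, hbot⟩⟩
  have slope_lim : Tendsto (slope S t) (𝓝[Z ∩ Ioi t] t) (𝓝 (S' t)) :=
    (hasDerivAt_iff_tendsto_slope.1 (hS t)).mono_left
      (nhdsWithin_mono _ fun x hx => (ne_of_gt hx.2 : x ≠ t))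
  refine tendsto_nhds_unique slope_lim (tendsto_const_nhds.congr' ?_)
  filter_upwards [self_mem_nhdsWithin] with x hx
  have hx0 : S x = 0 := hx.1
  simp [slope, hx0, h0]

/-! ### Surjective primitives as changes of variables -/

/-- The measure `q dξ` on labels with density `q`, where `ENNReal.ofReal` truncates negative
values of `q`. -/
noncomputable def labelMeasure (q : ℝ → ℝ) : Measure ℝ :=
  volume.withDensity fun ξ => ENNReal.ofReal (q ξ)

/-- `X` is an indefinite integral of the nonnegative density `q` and is onto `ℝ`. Such an `X` need
not be injective, but it still transports `q dξ` to Lebesgue measure; the map from labels to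
positions has this form at every time. -/
structure IsOntoPrimitive (X q : ℝ → ℝ) : Prop where
  measurable : Measurable q
  nonneg : ∀ ξ, 0 ≤ q ξ
  intervalIntegrable : ∀ a b, IntervalIntegrable q volume a b
  integral_eq_sub : ∀ a b, ∫ ξ in a..b, q ξ = X b - X a
  surjective : Function.Surjective X

namespace IsOntoPrimitive

variable {X q : ℝ → ℝ}

lemma monotone (h : IsOntoPrimitive X q) : Monotone X := fun a b hab =>
  sub_nonneg.1 <| h.integral_eq_sub a b ▸
    intervalIntegral.integral_nonneg hab fun ξ _ => h.nonneg ξ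

lemma continuous (h : IsOntoPrimitive X q) : Continuous X := by
  have : X = fun ξ => X 0 + ∫ y in (0 : ℝ)..ξ, q y := by
    ext ξ
    rw [h.integral_eq_sub, add_sub_cancel]
  rw [this]
  exact continuous_const.add (intervalIntegral.continuous_primitive h.intervalIntegrable 0)

lemma labelMeasure_Ioc (h : IsOntoPrimitive X q) {a b : ℝ} (hab : a ≤ b) :
    labelMeasure q (Ioc a b) = ENNReal.ofReal (X b - X a) := by
  rw [labelMeasure, withDensity_apply _ measurableSet_Ioc, ← ofReal_integral_eq_lintegral_ofReal
    ((intervalIntegrable_iff_integrableOn_Ioc_of_le hab).1 (h.intervalIntegrable a b))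
    (ae_of_all _ h.nonneg), ← intervalIntegral.integral_of_le hab, h.integral_eq_sub]

lemma labelMeasure_preimage_singleton (h : IsOntoPrimitive X q) (c : ℝ) :
    labelMeasure q (X ⁻¹' {c}) = 0 := by
  have hle : ∀ e : ℝ, 0 < e → labelMeasure q (X ⁻¹' {c}) ≤ ENNReal.ofReal e := fun e he => by
    obtain ⟨α, hα⟩ := h.surjective (c - e / 2)
    obtain ⟨β, hβ⟩ := h.surjective (c + e / 2)
    have hsub : X ⁻¹' {c} ⊆ Ioc α β := fun ξ (hξ : X ξ = c) =>
      ⟨h.monotone.reflect_lt (by linarith), (h.monotone.reflect_lt (by linarith)).le⟩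
    calc labelMeasure q (X ⁻¹' {c}) ≤ labelMeasure q (Ioc α β) := measure_mono hsub
      _ = ENNReal.ofReal e := by
        rw [h.labelMeasure_Ioc (h.monotone.reflect_lt (by linarith)).le, hα, hβ]
        ring_nf
  refine le_antisymm (ge_of_tendsto (f := ENNReal.ofReal) (x := 𝓝[>] 0) ?_ ?_)
    zero_le
  · simpa using (ENNReal.continuous_ofReal.tendsto 0).mono_left (nhdsWithin_le_nhds (s := Ioi 0))
  · filter_upwards [self_mem_nhdsWithin] with e he using hle e he

lemma Ioc_ae_eq_preimage (h : IsOntoPrimitive X q) (a b : ℝ) :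
    Ioc a b =ᵐ[labelMeasure q] X ⁻¹' Ioc (X a) (X b) := by
  have hne : ∀ c, ∀ᵐ ξ ∂labelMeasure q, X ξ ≠ c := fun c => by
    simpa [ae_iff, preimage] using h.labelMeasure_preimage_singleton c
  filter_upwards [hne (X a), hne (X b)] with ξ hξa hξb
  refine propext ⟨fun hξ => ⟨(h.monotone hξ.1.le).lt_of_ne' hξa, h.monotone hξ.2⟩, fun hξ => ?_⟩
  exact ⟨h.monotone.reflect_lt hξ.1, (h.monotone.reflect_lt (hξ.2.lt_of_ne hξb)).le⟩

lemma map_labelMeasure (h : IsOntoPrimitive X q) : (labelMeasure q).map X = volume := by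
  refine (Measure.ext_of_Ioc _ _ fun a b hab => ?_).symm
  obtain ⟨α, rfl⟩ := h.surjective a
  obtain ⟨β, rfl⟩ := h.surjective b
  rw [Measure.map_apply h.continuous.measurable measurableSet_Ioc,
    ← measure_congr (h.Ioc_ae_eq_preimage α β), h.labelMeasure_Ioc (h.monotone.reflect_lt hab).le,
    Real.volume_Ioc]

lemma map_labelMeasure_restrict (h : IsOntoPrimitive X q) (a b : ℝ) :
    ((labelMeasure q).restrict (Ioc a b)).map X = volume.restrict (Ioc (X a) (X b)) := by
  rw [Measure.restrict_congr_set (h.Ioc_ae_eq_preimage a b),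
    ← Measure.restrict_map h.continuous.measurable measurableSet_Ioc, h.map_labelMeasure]

lemma lintegral_mul_comp (h : IsOntoPrimitive X q) {G : ℝ → ℝ≥0∞} (hG : Measurable G) (a b : ℝ) :
    ∫⁻ ξ in Ioc a b, ENNReal.ofReal (q ξ) * G (X ξ) = ∫⁻ x in Ioc (X a) (X b), G x := by
  have hq := h.measurable
  rw [← h.map_labelMeasure_restrict a b, lintegral_map hG h.continuous.measurable, labelMeasure,
    restrict_withDensity measurableSet_Ioc]
  exact (lintegral_withDensity_eq_lintegral_mul _ (by fun_prop)
    (hG.comp h.continuous.measurable)).symm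

lemma setIntegral_mul_comp (h : IsOntoPrimitive X q) {G : ℝ → ℝ} (hG : Measurable G) (a b : ℝ) :
    ∫ ξ in Ioc a b, q ξ * G (X ξ) = ∫ x in Ioc (X a) (X b), G x := by
  have hq := h.measurable
  rw [← h.map_labelMeasure_restrict a b,
    integral_map h.continuous.aemeasurable hG.aestronglyMeasurable, labelMeasure,
    restrict_withDensity measurableSet_Ioc, integral_withDensity_eq_integral_toReal_smul₀
      (by fun_prop) (ae_of_all _ fun _ => ENNReal.ofReal_lt_top)]
  exact integral_congr_ae (ae_of_all _ fun ξ => by simp [ENNReal.toReal_ofReal (h.nonneg ξ)])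

lemma map_prodMk_withDensity {T : Type*} [MeasurableSpace T] {ν : Measure T} [SFinite ν]
    {X q : ℝ → T → ℝ} (hX : Measurable (Function.uncurry X)) (hq : Measurable (Function.uncurry q))
    (h : ∀ t, IsOntoPrimitive (fun ξ => X ξ t) fun ξ => q ξ t) :
    (((volume : Measure ℝ).prod ν).withDensity fun z => ENNReal.ofReal (q z.1 z.2)).map
      (fun z => (X z.1 z.2, z.2)) = (volume : Measure ℝ).prod ν := by
  have hΦ : Measurable fun z : ℝ × T => (X z.1 z.2, z.2) := hX.prodMk measurable_snd
  have hqz : Measurable fun z : ℝ × T => ENNReal.ofReal (q z.1 z.2) := hq.ennreal_ofReal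
  ext s hs
  rw [Measure.map_apply hΦ hs, withDensity_apply _ (hΦ hs), ← lintegral_indicator (hΦ hs),
    lintegral_prod_symm' _ (hqz.indicator (hΦ hs)), Measure.prod_apply_symm hs]
  refine lintegral_congr fun t => ?_
  have hst : MeasurableSet ((fun x => (x, t)) ⁻¹' s) := measurable_prodMk_right hs
  have hXt := (h t).continuous.measurable
  conv_rhs => rw [← (h t).map_labelMeasure, Measure.map_apply hXt hst, labelMeasure,
    withDensity_apply _ (hXt hst), ← lintegral_indicator (hXt hst)]
  rfl

end IsOntoPrimitive

/-! ### The Lagrangian system -/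

/-- Data of the system along characteristics: `p = 1/λ`, `F = f'` and `g = f''`, the initial strain
`s₀` (`s₀^p dξ` is the initial length element) and the product `w` of strain and slope, which is
constant along each characteristic. -/
structure LagrangianData where
  p : ℝ
  two_le_p : 2 ≤ p
  F : ℝ → ℝ
  g : ℝ → ℝ
  hasDerivAt_F : ∀ a, HasDerivAt F (g a) a
  M : ℝ
  abs_g_le : ∀ a, |g a| ≤ M
  L : ℝ≥0
  lipschitz_g : LipschitzWith L g
  s₀ : ℝ → ℝ
  measurable_s₀ : Measurable s₀
  s₀_nonneg : ∀ ξ, 0 ≤ s₀ ξ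
  s₀_le_one : ∀ ξ, s₀ ξ ≤ 1
  w : ℝ → ℝ
  measurable_w : Measurable w
  intervalIntegrable_weight : ∀ a b, IntervalIntegrable (fun ξ => (1 + |w ξ|) ^ p) volume a b

namespace LagrangianData

/-- The strain `S = s₀ + λ w A` of a characteristic, where `A = ∫₀ᵗ f''(U) dτ`. The length element
is `X_ξ = |S|^p` and the slope is `u_x = w / S`. -/
noncomputable def strain (D : LagrangianData) (A : ℝ → ℝ → ℝ) (ξ t : ℝ) : ℝ :=
  D.s₀ ξ + D.w ξ * A ξ t / D.p

/-- The length element `X_ξ = |S|^p`. -/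
noncomputable def lengthDensity (D : LagrangianData) (A : ℝ → ℝ → ℝ) (ξ t : ℝ) : ℝ :=
  |D.strain A ξ t| ^ D.p

/-- The label derivative `U_ξ = u_x X_ξ = w |S|^(p-2) S` of the solution. -/
noncomputable def slopeDensity (D : LagrangianData) (A : ℝ → ℝ → ℝ) (ξ t : ℝ) : ℝ :=
  D.w ξ * oddPow D.p (D.strain A ξ t)

/-- The solution `U(ξ,t) = u(X(ξ,t),t)` in Lagrangian variables. -/
noncomputable def U (D : LagrangianData) (A : ℝ → ℝ → ℝ) (ξ t : ℝ) : ℝ :=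
  ∫ η in (0 : ℝ)..ξ, D.slopeDensity A η t

/-- The Picard map `A ↦ ∫₀ᵗ f''(U) dτ`, whose fixed points solve the Lagrangian system. -/
noncomputable def picard (D : LagrangianData) (A : ℝ → ℝ → ℝ) (ξ t : ℝ) : ℝ :=
  ∫ τ in (0 : ℝ)..t, D.g (D.U A ξ τ)

/-- The class of functions `A` in which a fixed point of the Picard map is sought. -/
structure IsAdmissible (D : LagrangianData) (A : ℝ → ℝ → ℝ) : Prop where
  continuous : Continuous (Function.uncurry A)
  abs_le : ∀ ξ t, |A ξ t| ≤ D.M * |t|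

/-- A bound for the growth in time of the strain, relative to `1 + |w|`. -/
noncomputable def growth (D : LagrangianData) (t : ℝ) : ℝ := 1 + D.M * |t|

/-- The primitive of `(1 + |w|)^p`, which controls the dependence on the label of `U`, `A` and the
positions. -/
noncomputable def modulus (D : LagrangianData) (ξ : ℝ) : ℝ :=
  ∫ η in (0 : ℝ)..ξ, (1 + |D.w η|) ^ D.p

variable (D : LagrangianData) {A B : ℝ → ℝ → ℝ}

lemma p_pos : 0 < D.p := by linarith [D.two_le_p]

lemma M_nonneg : 0 ≤ D.M := (abs_nonneg _).trans (D.abs_g_le 0)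

lemma one_le_growth (t : ℝ) : 1 ≤ D.growth t :=
  le_add_of_nonneg_right (mul_nonneg D.M_nonneg (abs_nonneg t))

lemma growth_pos (t : ℝ) : 0 < D.growth t := one_pos.trans_le (D.one_le_growth t)

lemma growth_mono {s t : ℝ} (h : |s| ≤ |t|) : D.growth s ≤ D.growth t := by
  have := D.M_nonneg
  unfold growth
  gcongr

lemma continuous_growth_rpow {q : ℝ} (hq : 0 ≤ q) : Continuous fun t => D.growth t ^ q := by
  refine Continuous.rpow_const ?_ fun _ => Or.inr hq
  unfold growth
  fun_prop

lemma continuous_modulus : Continuous D.modulus :=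
  intervalIntegral.continuous_primitive D.intervalIntegrable_weight 0

lemma modulus_sub (ξ η : ℝ) : D.modulus ξ - D.modulus η = ∫ y in η..ξ, (1 + |D.w y|) ^ D.p :=
  intervalIntegral.integral_interval_sub_left (D.intervalIntegrable_weight _ _)
    (D.intervalIntegrable_weight _ _)

lemma abs_integral_le_modulus {φ : ℝ → ℝ} {c : ℝ} (hc : 0 ≤ c) {a b : ℝ}
    (hφ : ∀ y ∈ uIoc a b, |φ y| ≤ c * (1 + |D.w y|) ^ D.p) :
    |∫ y in a..b, φ y| ≤ c * |D.modulus b - D.modulus a| :=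
  abs_integral_sub_primitive_le hc D.intervalIntegrable_weight hφ

lemma lipschitz_F : LipschitzWith ⟨D.M, D.M_nonneg⟩ D.F :=
  lipschitzWith_of_nnnorm_deriv_le (fun a => (D.hasDerivAt_F a).differentiableAt) fun a => by
    rw [(D.hasDerivAt_F a).deriv]
    exact D.abs_g_le a

lemma abs_rpow_le_weight {a c q : ℝ} (ξ : ℝ) (hc : 0 ≤ c) (hq : 0 ≤ q)
    (ha : |a| ≤ (1 + |D.w ξ|) * c) : |a| ^ q ≤ c ^ q * (1 + |D.w ξ|) ^ q := by
  rw [← mul_rpow hc (by positivity), mul_comm c]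
  gcongr

section Bounds

variable {D}

lemma IsAdmissible.abs_strain_le (hA : D.IsAdmissible A) (ξ t : ℝ) :
    |D.strain A ξ t| ≤ (1 + |D.w ξ|) * D.growth t := by
  have hMt : 0 ≤ D.M * |t| := mul_nonneg D.M_nonneg (abs_nonneg t)
  have hs : |D.s₀ ξ| ≤ 1 := (abs_of_nonneg (D.s₀_nonneg ξ)).trans_le (D.s₀_le_one ξ)
  have hwA : |D.w ξ * A ξ t / D.p| ≤ |D.w ξ| * (D.M * |t|) := by
    rw [abs_div, abs_mul, abs_of_pos D.p_pos]
    refine (div_le_self (by positivity) (by linarith [D.two_le_p])).trans ?_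
    gcongr
    exact hA.abs_le ξ t
  have := abs_add_le (D.s₀ ξ) (D.w ξ * A ξ t / D.p)
  unfold strain growth
  nlinarith [abs_nonneg (D.w ξ)]

lemma IsAdmissible.abs_slopeDensity_le (hA : D.IsAdmissible A) (ξ t : ℝ) :
    |D.slopeDensity A ξ t| ≤ D.growth t ^ (D.p - 1) * (1 + |D.w ξ|) ^ D.p := by
  have hp := D.two_le_p
  have hw : 0 < 1 + |D.w ξ| := by positivity
  rw [slopeDensity, abs_mul, abs_oddPow (by linarith)]
  calc |D.w ξ| * |D.strain A ξ t| ^ (D.p - 1)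
      ≤ (1 + |D.w ξ|) * (D.growth t ^ (D.p - 1) * (1 + |D.w ξ|) ^ (D.p - 1)) := by
        gcongr
        · linarith
        · exact D.abs_rpow_le_weight ξ (D.growth_pos t).le (by linarith) (hA.abs_strain_le ξ t)
    _ = D.growth t ^ (D.p - 1) * ((1 + |D.w ξ|) ^ (D.p - 1) * (1 + |D.w ξ|)) := by ring
    _ = D.growth t ^ (D.p - 1) * (1 + |D.w ξ|) ^ D.p := by
        rw [← rpow_add_one hw.ne', sub_add_cancel]

lemma lengthDensity_nonneg (ξ t : ℝ) : 0 ≤ D.lengthDensity A ξ t := by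
  unfold lengthDensity
  positivity

lemma IsAdmissible.lengthDensity_le (hA : D.IsAdmissible A) (ξ t : ℝ) :
    D.lengthDensity A ξ t ≤ D.growth t ^ D.p * (1 + |D.w ξ|) ^ D.p :=
  D.abs_rpow_le_weight ξ (D.growth_pos t).le D.p_pos.le (hA.abs_strain_le ξ t)

lemma IsAdmissible.measurable_strain (hA : D.IsAdmissible A) :
    Measurable fun q : ℝ × ℝ => D.strain A q.1 q.2 := by
  have hAm : Measurable fun q : ℝ × ℝ => A q.1 q.2 := hA.continuous.measurable
  have := D.measurable_s₀
  have := D.measurable_w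
  unfold strain
  fun_prop

lemma IsAdmissible.measurable_slopeDensity (hA : D.IsAdmissible A) :
    Measurable fun q : ℝ × ℝ => D.slopeDensity A q.1 q.2 :=
  (D.measurable_w.comp measurable_fst).mul
    ((continuous_oddPow D.two_le_p).measurable.comp hA.measurable_strain)

lemma IsAdmissible.measurable_lengthDensity (hA : D.IsAdmissible A) :
    Measurable fun q : ℝ × ℝ => D.lengthDensity A q.1 q.2 :=
  (continuous_abs_rpow D.p_pos.le).measurable.comp hA.measurable_strain

lemma IsAdmissible.intervalIntegrable_slopeDensity (hA : D.IsAdmissible A) (t a b : ℝ) :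
    IntervalIntegrable (fun ξ => D.slopeDensity A ξ t) volume a b :=
  ((D.intervalIntegrable_weight a b).const_mul (D.growth t ^ (D.p - 1))).mono_fun
    (hA.measurable_slopeDensity.comp measurable_prodMk_right).aestronglyMeasurable
    (ae_of_all _ fun ξ => (hA.abs_slopeDensity_le ξ t).trans (le_abs_self _))

lemma IsAdmissible.intervalIntegrable_lengthDensity (hA : D.IsAdmissible A) (t a b : ℝ) :
    IntervalIntegrable (fun ξ => D.lengthDensity A ξ t) volume a b :=
  ((D.intervalIntegrable_weight a b).const_mul (D.growth t ^ D.p)).mono_fun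
    (hA.measurable_lengthDensity.comp measurable_prodMk_right).aestronglyMeasurable
    (ae_of_all _ fun ξ => (abs_of_nonneg (lengthDensity_nonneg ξ t)).trans_le
      ((hA.lengthDensity_le ξ t).trans (le_abs_self _)))

lemma IsAdmissible.continuous_strain (hA : D.IsAdmissible A) (ξ : ℝ) :
    Continuous fun t => D.strain A ξ t := by
  have : Continuous fun t => A ξ t := hA.continuous.comp (Continuous.prodMk_right ξ)
  unfold strain
  fun_prop

lemma IsAdmissible.continuous_slopeDensity (hA : D.IsAdmissible A) (ξ : ℝ) :
    Continuous fun t => D.slopeDensity A ξ t :=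
  continuous_const.mul ((continuous_oddPow D.two_le_p).comp (hA.continuous_strain ξ))

lemma IsAdmissible.U_sub (hA : D.IsAdmissible A) (ξ η t : ℝ) :
    D.U A ξ t - D.U A η t = ∫ y in η..ξ, D.slopeDensity A y t :=
  intervalIntegral.integral_interval_sub_left (hA.intervalIntegrable_slopeDensity _ _ _)
    (hA.intervalIntegrable_slopeDensity _ _ _)

lemma IsAdmissible.abs_U_sub_le (hA : D.IsAdmissible A) (ξ η t : ℝ) :
    |D.U A ξ t - D.U A η t| ≤ D.growth t ^ (D.p - 1) * |D.modulus ξ - D.modulus η| := by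
  rw [hA.U_sub]
  exact D.abs_integral_le_modulus (rpow_nonneg (D.growth_pos t).le _)
    fun y _ => hA.abs_slopeDensity_le y t

lemma IsAdmissible.continuous_U (hA : D.IsAdmissible A) :
    Continuous (Function.uncurry (D.U A)) := by
  have hp1 : 0 ≤ D.p - 1 := by linarith [D.two_le_p]
  refine continuous_uncurry_of_modulus (D.continuous_growth_rpow hp1) D.continuous_modulus
    (fun ξ => continuous_iff_continuousAt.2 fun t₀ => ?_) hA.abs_U_sub_le
  refine intervalIntegral.continuousAt_of_dominated_interval
    (bound := fun y => D.growth (|t₀| + 1) ^ (D.p - 1) * (1 + |D.w y|) ^ D.p)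
    (Eventually.of_forall fun t =>
      (hA.measurable_slopeDensity.comp measurable_prodMk_right).aestronglyMeasurable) ?_
    ((D.intervalIntegrable_weight _ _).const_mul _)
    (ae_of_all _ fun y _ => (hA.continuous_slopeDensity y).continuousAt)
  filter_upwards [continuous_abs.continuousAt.eventually_lt_const (lt_add_one |t₀|)] with t ht
  refine ae_of_all _ fun y _ => (hA.abs_slopeDensity_le y t).trans ?_
  have := (D.growth_pos t).le
  have := D.growth_mono (ht.le.trans (le_abs_self _))
  gcongr

lemma IsAdmissible.abs_slopeDensity_sub_le (hA : D.IsAdmissible A) (hB : D.IsAdmissible B)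
    {ξ t δ : ℝ} (hδ : |A ξ t - B ξ t| ≤ δ) :
    |D.slopeDensity A ξ t - D.slopeDensity B ξ t|
      ≤ (D.p - 1) * D.growth t ^ (D.p - 2) * δ * (1 + |D.w ξ|) ^ D.p := by
  have hp1 : 0 ≤ D.p - 1 := by linarith [D.two_le_p]
  have hw : 0 < 1 + |D.w ξ| := by positivity
  have hgrowth := D.growth_pos t
  have hstrain : |D.strain A ξ t - D.strain B ξ t| ≤ (1 + |D.w ξ|) * δ := by
    have : D.strain A ξ t - D.strain B ξ t = D.w ξ * (A ξ t - B ξ t) / D.p := by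
      unfold strain
      ring
    rw [this, abs_div, abs_mul, abs_of_pos D.p_pos]
    refine (div_le_self (by positivity) (by linarith)).trans ?_
    gcongr
    linarith
  rw [slopeDensity, slopeDensity, ← mul_sub, abs_mul]
  calc |D.w ξ| * |oddPow D.p (D.strain A ξ t) - oddPow D.p (D.strain B ξ t)|
      ≤ (1 + |D.w ξ|) * ((D.p - 1) * ((1 + |D.w ξ|) * D.growth t) ^ (D.p - 2)
          * ((1 + |D.w ξ|) * δ)) := by
        gcongr
        · linarith
        · refine (abs_oddPow_sub_le D.two_le_p (hA.abs_strain_le ξ t)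
            (hB.abs_strain_le ξ t)).trans ?_
          gcongr
    _ = (D.p - 1) * D.growth t ^ (D.p - 2) * δ
          * ((1 + |D.w ξ|) ^ (D.p - 2) * (1 + |D.w ξ|) ^ (2 : ℝ)) := by
        rw [mul_rpow hw.le hgrowth.le, rpow_two]
        ring
    _ = _ := by rw [← rpow_add hw, sub_add_cancel]

lemma IsAdmissible.abs_U_sub_U_le (hA : D.IsAdmissible A) (hB : D.IsAdmissible B) {ξ t δ : ℝ}
    (hδ : ∀ η, |η| ≤ |ξ| → |A η t - B η t| ≤ δ) :
    |D.U A ξ t - D.U B ξ t| ≤ (D.p - 1) * D.growth t ^ (D.p - 2) * δ * |D.modulus ξ| := by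
  have hδ0 : 0 ≤ δ := (abs_nonneg _).trans (hδ ξ le_rfl)
  have hp1 : 0 ≤ D.p - 1 := by linarith [D.two_le_p]
  have hgrowth := D.growth_pos t
  have h0 : D.modulus ξ = D.modulus ξ - D.modulus 0 := by simp [modulus]
  rw [U, U, h0, ← intervalIntegral.integral_sub (hA.intervalIntegrable_slopeDensity _ _ _)
    (hB.intervalIntegrable_slopeDensity _ _ _)]
  refine D.abs_integral_le_modulus (by positivity) fun y hy =>
    hA.abs_slopeDensity_sub_le hB (hδ y ?_)
  simpa using abs_sub_left_of_mem_uIcc (uIoc_subset_uIcc hy)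

lemma IsAdmissible.continuous_g_U (hA : D.IsAdmissible A) :
    Continuous fun q : ℝ × ℝ => D.g (D.U A q.1 q.2) :=
  D.lipschitz_g.continuous.comp hA.continuous_U

lemma IsAdmissible.continuous_g_U_time (hA : D.IsAdmissible A) (ξ : ℝ) :
    Continuous fun t => D.g (D.U A ξ t) :=
  hA.continuous_g_U.comp (Continuous.prodMk_right ξ)

lemma IsAdmissible.abs_picard_sub_time_le (hA : D.IsAdmissible A) (ξ t t' : ℝ) :
    |D.picard A ξ t - D.picard A ξ t'| ≤ D.M * |t - t'| := by
  rw [picard, picard, intervalIntegral.integral_interval_sub_left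
    ((hA.continuous_g_U_time ξ).intervalIntegrable _ _)
    ((hA.continuous_g_U_time ξ).intervalIntegrable _ _)]
  exact intervalIntegral.norm_integral_le_of_norm_le_const (f := fun τ => D.g (D.U A ξ τ))
    fun _ _ => D.abs_g_le _

lemma IsAdmissible.abs_picard_sub_label_le (hA : D.IsAdmissible A) (ξ η t : ℝ) :
    |D.picard A ξ t - D.picard A η t|
      ≤ D.L * D.growth t ^ (D.p - 1) * |t| * |D.modulus ξ - D.modulus η| := by
  rw [picard, picard, ← intervalIntegral.integral_sub
    ((hA.continuous_g_U_time ξ).intervalIntegrable _ _)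
    ((hA.continuous_g_U_time η).intervalIntegrable _ _)]
  have hbound : ∀ τ ∈ uIoc 0 t, ‖D.g (D.U A ξ τ) - D.g (D.U A η τ)‖
      ≤ D.L * (D.growth t ^ (D.p - 1) * |D.modulus ξ - D.modulus η|) := fun τ hτ => by
    have hτt : |τ| ≤ |t| := by simpa using abs_sub_left_of_mem_uIcc (uIoc_subset_uIcc hτ)
    refine (D.lipschitz_g.dist_le_mul _ _).trans
      (mul_le_mul_of_nonneg_left ((hA.abs_U_sub_le ξ η τ).trans ?_) D.L.2)
    have := (D.growth_pos τ).le
    have := D.growth_mono hτt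
    have : 0 ≤ D.p - 1 := by linarith [D.two_le_p]
    gcongr
  refine (intervalIntegral.norm_integral_le_of_norm_le_const hbound).trans_eq ?_
  rw [sub_zero]
  ring

lemma isAdmissible_picard (hA : D.IsAdmissible A) : D.IsAdmissible (D.picard A) where
  continuous := intervalIntegral.continuous_parametric_intervalIntegral_of_continuous
    (f := fun (q : ℝ × ℝ) τ => D.g (D.U A q.1 τ))
    (hA.continuous_g_U.comp
      ((continuous_fst.comp continuous_fst).prodMk continuous_snd)) continuous_snd
  abs_le ξ t := by simpa [picard] using hA.abs_picard_sub_time_le ξ t 0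

end Bounds

section FixedPoint

lemma integral_exp_mul_abs_le {k : ℝ} (hk : 0 < k) (t : ℝ) :
    |∫ τ in (0 : ℝ)..t, exp (k * |τ|)| ≤ exp (k * |t|) / k := by
  wlog ht : 0 ≤ t generalizing t
  · have hneg := this (-t) (by linarith)
    rw [abs_neg, intervalIntegral.integral_symm, abs_neg, ← neg_zero,
      ← intervalIntegral.integral_comp_neg] at hneg
    simpa only [abs_neg] using hneg
  have hcongr : ∫ τ in (0 : ℝ)..t, exp (k * |τ|) = ∫ τ in (0 : ℝ)..t, exp (k * τ) :=
    intervalIntegral.integral_congr fun τ hτ => by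
      rw [uIcc_of_le ht] at hτ
      simp only [abs_of_nonneg hτ.1]
  have hval : ∫ τ in (0 : ℝ)..t, exp (k * τ) = (exp (k * t) - 1) / k := by
    rw [intervalIntegral.integral_comp_mul_left (fun τ => exp τ) hk.ne', integral_exp, mul_zero,
      exp_zero, smul_eq_mul]
    field_simp
  have hge : 1 ≤ exp (k * t) := one_le_exp (by positivity)
  rw [hcongr, hval, abs_of_nonneg ht, abs_of_nonneg (div_nonneg (by linarith) hk.le)]
  gcongr
  linarith

variable {D} in
lemma IsAdmissible.abs_picard_sub_picard_le (hA : D.IsAdmissible A) (hB : D.IsAdmissible B)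
    {k δ T ξ : ℝ} (hk : 0 < k)
    (hkξ : 2 * (D.L * ((D.p - 1) * D.growth T ^ (D.p - 2) * |D.modulus ξ|)) ≤ k)
    (hδ : ∀ η t, |η| ≤ |ξ| → |t| ≤ |T| → |A η t - B η t| ≤ δ * exp (k * |t|))
    {t : ℝ} (ht : |t| ≤ |T|) :
    |D.picard A ξ t - D.picard B ξ t| ≤ δ / 2 * exp (k * |t|) := by
  have hδ0 : 0 ≤ δ := by
    simpa using (abs_nonneg _).trans (hδ ξ 0 le_rfl (by simp))
  have hp2 : 0 ≤ D.p - 2 := by linarith [D.two_le_p]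
  have hp1 : 0 ≤ D.p - 1 := by linarith
  have hint : ∀ τ ∈ uIoc 0 t,
      ‖D.g (D.U A ξ τ) - D.g (D.U B ξ τ)‖ ≤ k / 2 * δ * exp (k * |τ|) := fun τ hτ => by
    have hτT : |τ| ≤ |T| :=
      (by simpa using abs_sub_left_of_mem_uIcc (uIoc_subset_uIcc hτ) : |τ| ≤ |t|).trans ht
    have hU := hA.abs_U_sub_U_le hB fun η hη => hδ η τ hη hτT
    have := (D.growth_pos τ).le
    have := D.growth_mono hτT
    calc ‖D.g (D.U A ξ τ) - D.g (D.U B ξ τ)‖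
        ≤ D.L * |D.U A ξ τ - D.U B ξ τ| := D.lipschitz_g.dist_le_mul _ _
      _ ≤ D.L * ((D.p - 1) * D.growth T ^ (D.p - 2) * (δ * exp (k * |τ|)) * |D.modulus ξ|) := by
        gcongr
        exact hU.trans (by gcongr)
      _ = D.L * ((D.p - 1) * D.growth T ^ (D.p - 2) * |D.modulus ξ|) * δ * exp (k * |τ|) := by
        ring
      _ ≤ k / 2 * δ * exp (k * |τ|) := by gcongr; linarith
  have hexp : IntervalIntegrable (fun τ => k / 2 * δ * exp (k * |τ|)) volume 0 t :=
    (by fun_prop : Continuous fun τ => k / 2 * δ * exp (k * |τ|)).intervalIntegrable _ _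
  rw [picard, picard, ← intervalIntegral.integral_sub
    ((hA.continuous_g_U_time ξ).intervalIntegrable _ _)
    ((hB.continuous_g_U_time ξ).intervalIntegrable _ _)]
  refine (intervalIntegral.norm_integral_le_abs_of_norm_le
    ((ae_restrict_iff' measurableSet_uIoc).2 (ae_of_all volume hint)) hexp).trans ?_
  rw [intervalIntegral.integral_const_mul, abs_mul, abs_of_nonneg (by positivity)]
  calc k / 2 * δ * |∫ τ in (0 : ℝ)..t, exp (k * |τ|)| ≤ k / 2 * δ * (exp (k * |t|) / k) := by
        gcongr
        exact integral_exp_mul_abs_le hk t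
    _ = δ / 2 * exp (k * |t|) := by field_simp

/-- The Picard iterates, starting from `0`. -/
noncomputable def picardIterate (n : ℕ) : ℝ → ℝ → ℝ := D.picard^[n] fun _ _ => 0

lemma picardIterate_succ (n : ℕ) : D.picardIterate (n + 1) = D.picard (D.picardIterate n) :=
  Function.iterate_succ_apply' _ n _

lemma isAdmissible_picardIterate (n : ℕ) : D.IsAdmissible (D.picardIterate n) := by
  induction n with
  | zero =>
    exact ⟨continuous_const, fun _ t => by
      simpa [picardIterate] using mul_nonneg D.M_nonneg (abs_nonneg t)⟩
  | succ n ih => exact D.picardIterate_succ n ▸ isAdmissible_picard ih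

lemma modulus_abs_le {ξ R : ℝ} (hξ : |ξ| ≤ R) :
    |D.modulus ξ| ≤ max |D.modulus (-R)| |D.modulus R| := by
  have hmono : Monotone D.modulus := fun a b hab => sub_nonneg.1 <| D.modulus_sub b a ▸
    intervalIntegral.integral_nonneg hab fun y _ => by positivity
  exact abs_le_max_abs_abs (hmono (abs_le.1 hξ).1) (hmono (abs_le.1 hξ).2)

lemma exists_abs_picardIterate_sub_le (R T : ℝ) : ∃ k, ∀ n ξ t, |ξ| ≤ R → |t| ≤ |T| →
    |D.picardIterate (n + 1) ξ t - D.picardIterate n ξ t|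
      ≤ D.M * |T| * (1 / 2) ^ n * exp (k * |t|) := by
  set C := max |D.modulus (-R)| |D.modulus R|
  have hp1 : 0 ≤ D.p - 1 := by linarith [D.two_le_p]
  have hM := D.M_nonneg
  have := D.growth_pos T
  set k := 2 * (D.L * ((D.p - 1) * D.growth T ^ (D.p - 2) * C)) + 1 with hk
  have hk0 : 0 < k := by positivity
  refine ⟨k, fun n => ?_⟩
  induction n with
  | zero =>
    intro ξ t _ ht
    calc |D.picardIterate 1 ξ t - D.picardIterate 0 ξ t| ≤ D.M * |t| := by
          simpa [picardIterate] using (D.isAdmissible_picardIterate 1).abs_le ξ t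
      _ ≤ D.M * |T| * (1 / 2) ^ 0 * exp (k * |t|) := by
          rw [pow_zero, mul_one]
          exact (mul_le_mul_of_nonneg_left ht hM).trans
            (le_mul_of_one_le_right (by positivity) (one_le_exp (by positivity)))
  | succ n ih =>
    intro ξ t hξ ht
    have hkξ : 2 * (D.L * ((D.p - 1) * D.growth T ^ (D.p - 2) * |D.modulus ξ|)) ≤ k := by
      have := D.modulus_abs_le hξ
      rw [hk]
      refine le_add_of_le_of_nonneg ?_ zero_le_one
      gcongr
    have hstep := (D.isAdmissible_picardIterate (n + 1)).abs_picard_sub_picard_le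
      (D.isAdmissible_picardIterate n) hk0 hkξ (fun η s hη hs => ih η s (hη.trans hξ) hs) ht
    rw [← picardIterate_succ, ← picardIterate_succ] at hstep
    exact hstep.trans_eq (by ring)

lemma exists_tendsto_picardIterate (ξ t : ℝ) :
    ∃ a, Tendsto (fun n => D.picardIterate n ξ t) atTop (𝓝 a) := by
  obtain ⟨k, hk⟩ := D.exists_abs_picardIterate_sub_le |ξ| t
  refine cauchySeq_tendsto_of_complete (cauchySeq_of_le_geometric (1 / 2)
    (D.M * |t| * exp (k * |t|)) (by norm_num) fun n => ?_)
  rw [dist_comm]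
  exact (hk n ξ t le_rfl le_rfl).trans_eq (by ring)

variable {D} {a : ℕ → ℝ → ℝ → ℝ}

/-- Pointwise limits need not be continuous in general, but functions in the image of the Picard map
share a modulus of continuity. -/
lemma isAdmissible_of_tendsto_picard (ha : ∀ n, D.IsAdmissible (a n))
    (hlim : ∀ ξ t, Tendsto (fun n => D.picard (a n) ξ t) atTop (𝓝 (A ξ t))) :
    D.IsAdmissible A where
  abs_le ξ t := le_of_tendsto (hlim ξ t).abs (Eventually.of_forall fun n =>
    (isAdmissible_picard (ha n)).abs_le ξ t)
  continuous := by
    have hgrowth := D.continuous_growth_rpow (q := D.p - 1) (by linarith [D.two_le_p])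
    refine continuous_uncurry_of_modulus
      (C := fun t => D.L * D.growth t ^ (D.p - 1) * |t|) (by fun_prop) D.continuous_modulus
      (fun ξ => ?_) fun ξ η t => ?_
    · refine (LipschitzWith.of_dist_le_mul (K := ⟨D.M, D.M_nonneg⟩) fun t t' => ?_).continuous
      exact le_of_tendsto ((hlim ξ t).dist (hlim ξ t'))
        (Eventually.of_forall fun n => (ha n).abs_picard_sub_time_le ξ t t')
    · exact le_of_tendsto ((hlim ξ t).dist (hlim η t))
        (Eventually.of_forall fun n => (ha n).abs_picard_sub_label_le ξ η t)

lemma tendsto_U (ha : ∀ n, D.IsAdmissible (a n))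
    (hlim : ∀ ξ t, Tendsto (fun n => a n ξ t) atTop (𝓝 (A ξ t))) (ξ t : ℝ) :
    Tendsto (fun n => D.U (a n) ξ t) atTop (𝓝 (D.U A ξ t)) := by
  refine intervalIntegral.tendsto_integral_filter_of_dominated_convergence
    (fun y => D.growth t ^ (D.p - 1) * (1 + |D.w y|) ^ D.p)
    (Eventually.of_forall fun n =>
      ((ha n).measurable_slopeDensity.comp measurable_prodMk_right).aestronglyMeasurable)
    (Eventually.of_forall fun n => ae_of_all _ fun y _ => (ha n).abs_slopeDensity_le y t)
    ((D.intervalIntegrable_weight _ _).const_mul _) (ae_of_all _ fun y _ => ?_)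
  refine (((continuous_oddPow D.two_le_p).tendsto _).comp ?_).const_mul _
  exact (((hlim y t).const_mul _).div_const _).const_add _

lemma tendsto_picard (ha : ∀ n, D.IsAdmissible (a n))
    (hlim : ∀ ξ t, Tendsto (fun n => a n ξ t) atTop (𝓝 (A ξ t))) (ξ t : ℝ) :
    Tendsto (fun n => D.picard (a n) ξ t) atTop (𝓝 (D.picard A ξ t)) :=
  intervalIntegral.tendsto_integral_filter_of_dominated_convergence (fun _ => D.M)
    (Eventually.of_forall fun n => ((ha n).continuous_g_U_time ξ).aestronglyMeasurable)
    (Eventually.of_forall fun _ => ae_of_all _ fun _ _ => D.abs_g_le _)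
    intervalIntegrable_const
    (ae_of_all _ fun τ _ => (D.lipschitz_g.continuous.tendsto _).comp (tendsto_U ha hlim ξ τ))

variable (D)

theorem exists_picard_eq_self : ∃ A, D.IsAdmissible A ∧ D.picard A = A := by
  choose A hA using D.exists_tendsto_picardIterate
  have hsucc : ∀ ξ t, Tendsto (fun n => D.picard (D.picardIterate n) ξ t) atTop (𝓝 (A ξ t)) :=
    fun ξ t => by
      simpa only [Function.comp_def, picardIterate_succ] using
        (hA ξ t).comp (tendsto_add_atTop_nat 1)
  refine ⟨A, isAdmissible_of_tendsto_picard D.isAdmissible_picardIterate hsucc, ?_⟩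
  ext ξ t
  exact tendsto_nhds_unique (tendsto_picard D.isAdmissible_picardIterate hA ξ t) (hsucc ξ t)

end FixedPoint

end LagrangianData

/-! ### Interleaved material and rarefaction labels -/

/-- The material labels, which carry the initial length: the negative half line and, in each block
`[k, k+1)`, the first halves of `n k` cells of equal length. The remaining rarefaction labels have
zero initial length and open up only at positive times. -/
def materialLabels (n : ℕ → ℕ+) : Set ℝ :=
  {ξ | ξ < 0 ∨ Int.fract ((n ⌊ξ⌋₊ : ℝ) * ξ) < 1 / 2}

/-- Half the length of a cell in the block `[k, k+1)`; translation by it turns material labels into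
rarefaction labels. -/
noncomputable def halfCell (n : ℕ → ℕ+) (k : ℕ) : ℝ := 1 / (2 * n k)

/-- The initial strain: the indicator function of the material labels. -/
noncomputable def initialStrain (n : ℕ → ℕ+) : ℝ → ℝ := (materialLabels n).indicator fun _ => 1

/-- The initial position of a label, at which the material labels of `[0, ξ]` have total length
`initialPosition n ξ`. -/
noncomputable def initialPosition (n : ℕ → ℕ+) (ξ : ℝ) : ℝ := ∫ η in (0 : ℝ)..ξ, initialStrain n η

open Classical in
/-- The product of slope and strain, a constant of motion along characteristics. A material label
carries the initial slope `v` at its initial position; a rarefaction label copies the material label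
half a cell to its left. -/
noncomputable def initialWeight (n : ℕ → ℕ+) (v : ℝ → ℝ) (ξ : ℝ) : ℝ :=
  if ξ ∈ materialLabels n then v (initialPosition n ξ)
  else v (initialPosition n (ξ - halfCell n ⌊ξ⌋₊))

lemma halfCell_pos (n : ℕ → ℕ+) (k : ℕ) : 0 < halfCell n k := by
  rw [halfCell]
  positivity

lemma halfCell_le_one (n : ℕ → ℕ+) (k : ℕ) : halfCell n k ≤ 1 := by
  have : (1 : ℝ) ≤ n k := by exact_mod_cast (one_le : 1 ≤ n k)
  rw [halfCell, div_le_one (by positivity)]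
  linarith

lemma floor_eq_of_mem_Ico {k : ℕ} {ξ : ℝ} (h : ξ ∈ Ico (k : ℝ) (k + 1)) : ⌊ξ⌋₊ = k :=
  (Nat.floor_eq_iff (k.cast_nonneg.trans h.1)).2 h

lemma fract_add_half_lt_iff (y : ℝ) : Int.fract (y + 1 / 2) < 1 / 2 ↔ ¬ Int.fract y < 1 / 2 := by
  have split := Int.self_sub_floor y
  have nonneg := Int.fract_nonneg y
  have lt_one := Int.fract_lt_one y
  by_cases h : Int.fract y < 1 / 2
  · have : Int.fract (y + 1 / 2) = Int.fract y + 1 / 2 := Int.fract_eq_iff.2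
      ⟨by linarith, by linarith, ⌊y⌋, by linarith⟩
    simp only [this, h, not_true_eq_false, iff_false]
    linarith
  · have : Int.fract (y + 1 / 2) = Int.fract y - 1 / 2 := Int.fract_eq_iff.2
      ⟨by linarith, by linarith, ⌊y⌋ + 1, by push_cast; linarith⟩
    simp only [this, h, not_false_eq_true, iff_true]
    linarith

lemma mem_Ico_mul_iff_add_half {y : ℝ} (h : Int.fract y < 1 / 2) (a b : ℕ) :
    y + 1 / 2 ∈ Ico (a : ℝ) b ↔ y ∈ Ico (a : ℝ) b := by
  have hfloor : ⌊y + 1 / 2⌋ = ⌊y⌋ := Int.floor_eq_iff.2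
    ⟨by linarith [Int.floor_le y], by linarith [Int.self_sub_floor y]⟩
  have hcast : ∀ z : ℝ, z ∈ Ico (a : ℝ) b ↔ (a : ℤ) ≤ ⌊z⌋ ∧ ⌊z⌋ < (b : ℤ) := fun z => by
    simp [Int.le_floor, Int.floor_lt]
  rw [hcast, hcast, hfloor]

section Labels

variable (n : ℕ → ℕ+)

lemma measurableSet_materialLabels : MeasurableSet (materialLabels n) := by
  have : Measurable fun ξ : ℝ => (n ⌊ξ⌋₊ : ℝ) :=
    (measurable_from_top (f := fun k : ℕ => (n k : ℝ))).comp Nat.measurable_floor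
  exact measurableSet_Iio.union (measurableSet_lt (this.mul measurable_id).fract measurable_const)

lemma mem_materialLabels_iff {k : ℕ} {ξ : ℝ} (h : ξ ∈ Ico (k : ℝ) (k + 1)) :
    ξ ∈ materialLabels n ↔ Int.fract (n k * ξ) < 1 / 2 := by
  have : ¬ ξ < 0 := not_lt.2 (k.cast_nonneg.trans h.1)
  simp [materialLabels, floor_eq_of_mem_Ico h, this]

lemma preimage_add_halfCell (k : ℕ) :
    (· + halfCell n k) ⁻¹' (Ico (k : ℝ) (k + 1) \ materialLabels n)
      = Ico (k : ℝ) (k + 1) ∩ materialLabels n := by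
  have hpos : (0 : ℝ) < n k := by exact_mod_cast (n k).pos
  have hshift : ∀ ξ, n k * (ξ + halfCell n k) = n k * ξ + 1 / 2 := fun ξ => by
    rw [halfCell]
    field_simp
  have hscale : ∀ ξ : ℝ, ξ ∈ Ico (k : ℝ) (k + 1) ↔
      n k * ξ ∈ Ico ((n k * k : ℕ) : ℝ) (n k * (k + 1) : ℕ) := fun ξ => by
    simp [mul_le_mul_iff_right₀ hpos, mul_lt_mul_iff_right₀ hpos]
  ext ξ
  constructor
  · rintro ⟨hblock, hmem⟩
    rw [mem_materialLabels_iff n hblock, hshift, fract_add_half_lt_iff, not_not] at hmem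
    have hξ : ξ ∈ Ico (k : ℝ) (k + 1) := by
      rwa [hscale, ← mem_Ico_mul_iff_add_half hmem, ← hshift, ← hscale]
    exact ⟨hξ, (mem_materialLabels_iff n hξ).2 hmem⟩
  · rintro ⟨hblock, hmem⟩
    rw [mem_materialLabels_iff n hblock] at hmem
    have hξ : ξ + halfCell n k ∈ Ico (k : ℝ) (k + 1) := by
      rwa [hscale, hshift, mem_Ico_mul_iff_add_half hmem, ← hscale]
    refine ⟨hξ, ?_⟩
    rw [mem_materialLabels_iff n hξ, hshift, fract_add_half_lt_iff, not_not]
    exact hmem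

lemma setLIntegral_inter_diff_materialLabels (k : ℕ) (s : Set ℝ) (G : ℝ → ℝ≥0∞) :
    ∫⁻ ξ in s ∩ (Ico (k : ℝ) (k + 1) \ materialLabels n), G ξ
      = ∫⁻ ξ in (· + halfCell n k) ⁻¹' s ∩ (Ico (k : ℝ) (k + 1) ∩ materialLabels n),
          G (ξ + halfCell n k) := by
  rw [← preimage_add_halfCell, ← preimage_inter]
  exact ((measurePreserving_add_right volume _).setLIntegral_comp_preimage_emb
    (measurableEmbedding_addRight _) G _).symm

lemma volume_block_inter_materialLabels (k : ℕ) :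
    volume (Ico (k : ℝ) (k + 1) ∩ materialLabels n) = 2⁻¹ := by
  have halves := measure_inter_add_sdiff (μ := volume) (Ico (k : ℝ) (k + 1))
    (measurableSet_materialLabels n)
  rw [← measure_preimage_add_right volume (halfCell n k) (Ico (k : ℝ) (k + 1) \ materialLabels n),
    preimage_add_halfCell, Real.volume_Ico, add_sub_cancel_left, ENNReal.ofReal_one,
    ← two_mul] at halves
  exact ENNReal.eq_inv_of_mul_eq_one_left (by rwa [mul_comm] at halves)

lemma measurable_initialStrain : Measurable (initialStrain n) :=
  measurable_const.indicator (measurableSet_materialLabels n)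

lemma initialStrain_nonneg (ξ : ℝ) : 0 ≤ initialStrain n ξ :=
  indicator_nonneg (fun _ _ => zero_le_one) _

lemma initialStrain_le_one (ξ : ℝ) : initialStrain n ξ ≤ 1 :=
  indicator_le_self' (fun _ _ => zero_le_one) _

lemma initialStrain_of_neg {ξ : ℝ} (h : ξ < 0) : initialStrain n ξ = 1 :=
  indicator_of_mem (show ξ ∈ materialLabels n from Or.inl h) _

lemma abs_initialStrain_rpow {p : ℝ} (hp : p ≠ 0) (ξ : ℝ) :
    |initialStrain n ξ| ^ p = initialStrain n ξ := by
  by_cases hξ : ξ ∈ materialLabels n <;> simp [initialStrain, hξ, hp]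

lemma intervalIntegrable_initialStrain (a b : ℝ) :
    IntervalIntegrable (initialStrain n) volume a b :=
  (intervalIntegrable_const (c := (1 : ℝ))).mono_fun
    (measurable_initialStrain n).aestronglyMeasurable (ae_of_all _ fun ξ => by
      simpa [abs_of_nonneg (initialStrain_nonneg n ξ)] using initialStrain_le_one n ξ)

lemma integral_initialStrain (a b : ℝ) :
    ∫ ξ in a..b, initialStrain n ξ = initialPosition n b - initialPosition n a :=
  (intervalIntegral.integral_interval_sub_left (intervalIntegrable_initialStrain n _ _)
    (intervalIntegrable_initialStrain n _ _)).symm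

@[simp]
lemma initialPosition_zero : initialPosition n 0 = 0 := intervalIntegral.integral_same

lemma initialPosition_of_nonpos {ξ : ℝ} (h : ξ ≤ 0) : initialPosition n ξ = ξ := by
  have : ∫ η in ξ..(0 : ℝ), initialStrain n η = ∫ _ in ξ..(0 : ℝ), (1 : ℝ) := by
    refine intervalIntegral.integral_congr_ae ?_
    filter_upwards [Measure.ae_ne volume (0 : ℝ)] with x hx hxξ
    rw [uIoc_of_le h] at hxξ
    exact initialStrain_of_neg n (hxξ.2.lt_of_ne hx)
  rw [integral_initialStrain, intervalIntegral.integral_const, initialPosition_zero] at this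
  simpa using this

lemma monotone_initialPosition : Monotone (initialPosition n) := fun a b hab =>
  sub_nonneg.1 <| integral_initialStrain n a b ▸
    intervalIntegral.integral_nonneg hab fun ξ _ => initialStrain_nonneg n ξ

lemma initialPosition_sub_le {a b : ℝ} (hab : a ≤ b) :
    initialPosition n b - initialPosition n a ≤ b - a := by
  rw [← integral_initialStrain]
  simpa using intervalIntegral.integral_mono_on (μ := volume) hab
    (intervalIntegrable_initialStrain n a b) (intervalIntegrable_const (c := (1 : ℝ)))
    fun x _ => initialStrain_le_one n x

lemma initialPosition_natCast (k : ℕ) : initialPosition n k = k / 2 := by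
  induction k with
  | zero => simp
  | succ k ih =>
    have step : initialPosition n ((k : ℝ) + 1) - initialPosition n k = 1 / 2 := by
      rw [← integral_initialStrain, intervalIntegral.integral_of_le (by linarith),
        ← integral_Ico_eq_integral_Ioc, initialStrain,
        setIntegral_indicator (measurableSet_materialLabels n), setIntegral_const, measureReal_def,
        volume_block_inter_materialLabels]
      simp
    push_cast
    linarith

lemma isOntoPrimitive_initialPosition :
    IsOntoPrimitive (initialPosition n) (initialStrain n) where
  measurable := measurable_initialStrain n
  nonneg := initialStrain_nonneg n
  intervalIntegrable := intervalIntegrable_initialStrain n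
  integral_eq_sub := integral_initialStrain n
  surjective := by
    refine Continuous.surjective (intervalIntegral.continuous_primitive
      (intervalIntegrable_initialStrain n) 0) ?_ ?_
    · refine tendsto_atTop_mono' (f₁ := fun ξ : ℝ => (⌊ξ⌋₊ : ℝ) / 2) _ ?_
        ((tendsto_natCast_atTop_atTop.comp tendsto_nat_floor_atTop).atTop_div_const two_pos)
      filter_upwards [eventually_ge_atTop 0] with ξ h
      exact (initialPosition_natCast n _).symm.trans_le
        (monotone_initialPosition n (Nat.floor_le h))
    · exact tendsto_id.congr' ((eventually_le_atBot 0).mono fun ξ h =>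
        (initialPosition_of_nonpos n h).symm)

end Labels

/-- An initial slope: `v` vanishes on the left half line and `(1 + |v|) ^ p` is locally
integrable. -/
structure IsInitialSlope (p : ℝ) (v : ℝ → ℝ) : Prop where
  measurable : Measurable v
  eq_zero_of_nonpos : ∀ x ≤ 0, v x = 0
  intervalIntegrable_weight : ∀ a b, IntervalIntegrable (fun x => (1 + |v x|) ^ p) volume a b

lemma initialWeight_of_mem {n : ℕ → ℕ+} {v : ℝ → ℝ} {ξ : ℝ} (h : ξ ∈ materialLabels n) :
    initialWeight n v ξ = v (initialPosition n ξ) := if_pos h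

lemma initialWeight_add_halfCell {n : ℕ → ℕ+} {v : ℝ → ℝ} {k : ℕ} {ξ : ℝ}
    (h : ξ ∈ Ico (k : ℝ) (k + 1) ∩ materialLabels n) :
    initialWeight n v (ξ + halfCell n k) = v (initialPosition n ξ) := by
  rw [← preimage_add_halfCell] at h
  rw [initialWeight, if_neg h.2, floor_eq_of_mem_Ico h.1, add_sub_cancel_right]

namespace IsInitialSlope

variable {p : ℝ} {v : ℝ → ℝ} (n : ℕ → ℕ+)

lemma initialWeight_of_neg (h : IsInitialSlope p v) {ξ : ℝ} (hξ : ξ < 0) :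
    initialWeight n v ξ = 0 := by
  rw [initialWeight_of_mem (Or.inl hξ), initialPosition_of_nonpos n hξ.le,
    h.eq_zero_of_nonpos _ hξ.le]

lemma measurable_initialWeight (h : IsInitialSlope p v) : Measurable (initialWeight n v) := by
  have hcell : Measurable fun ξ : ℝ => halfCell n ⌊ξ⌋₊ :=
    (measurable_from_top (f := halfCell n)).comp Nat.measurable_floor
  have hX := (isOntoPrimitive_initialPosition n).continuous.measurable
  exact Measurable.ite (measurableSet_materialLabels n) (h.measurable.comp hX)
    (h.measurable.comp (hX.comp (measurable_id.sub hcell)))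

lemma setLIntegral_Ioc_inter_materialLabels (h : IsInitialSlope p v) {G : ℝ → ℝ≥0∞}
    (hG : Measurable G) (a b : ℝ) :
    ∫⁻ ξ in Ioc a b ∩ materialLabels n, G (v (initialPosition n ξ))
      = ∫⁻ x in Ioc (initialPosition n a) (initialPosition n b), G (v x) := by
  have transport := (isOntoPrimitive_initialPosition n).lintegral_mul_comp
    (hG.comp h.measurable) a b
  simp only [Function.comp] at transport
  rw [← transport, inter_comm, ← setLIntegral_indicator (measurableSet_materialLabels n)]
  refine lintegral_congr fun ξ => ?_
  by_cases hξ : ξ ∈ materialLabels n <;> simp [initialStrain, hξ]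

lemma setLIntegral_initialWeight_le (h : IsInitialSlope p v) {G : ℝ → ℝ≥0∞} (hG : Measurable G)
    (k : ℕ) (a b : ℝ) :
    ∫⁻ ξ in Ioc a b ∩ Ico (k : ℝ) (k + 1), G (initialWeight n v ξ)
      ≤ (∫⁻ x in Ioc (initialPosition n a) (initialPosition n b), G (v x)) +
        ∫⁻ x in Ioc (initialPosition n (a - halfCell n k)) (initialPosition n (b - halfCell n k)),
          G (v x) := by
  have hm := measurableSet_materialLabels n
  have hcover : Ioc a b ∩ Ico (k : ℝ) (k + 1) ⊆ (Ioc a b ∩ materialLabels n) ∪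
      (Ioc a b ∩ (Ico (k : ℝ) (k + 1) \ materialLabels n)) := fun ξ hξ =>
    (em (ξ ∈ materialLabels n)).imp (⟨hξ.1, ·⟩) (⟨hξ.1, hξ.2, ·⟩)
  refine (lintegral_mono_set hcover).trans ((lintegral_union_le _ _ _).trans (add_le_add ?_ ?_))
  · rw [← h.setLIntegral_Ioc_inter_materialLabels n hG]
    refine (setLIntegral_congr_fun (measurableSet_Ioc.inter hm) fun ξ hξ => ?_).le
    simp only [initialWeight_of_mem hξ.2]
  · rw [← h.setLIntegral_Ioc_inter_materialLabels n hG, setLIntegral_inter_diff_materialLabels,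
      preimage_add_const_Ioc]
    refine (setLIntegral_congr_fun (measurableSet_Ioc.inter (measurableSet_Ico.inter hm))
      fun ξ hξ => ?_).trans_le (lintegral_mono_set fun ξ hξ => ⟨hξ.1, hξ.2.2⟩)
    simp only [initialWeight_add_halfCell hξ.2]

lemma lintegral_weight (h : IsInitialSlope p v) {a b : ℝ} (hab : a ≤ b) :
    ∫⁻ x in Ioc a b, ENNReal.ofReal ((1 + |v x|) ^ p)
      = ENNReal.ofReal (∫ x in a..b, (1 + |v x|) ^ p) := by
  rw [intervalIntegral.integral_of_le hab]
  exact (ofReal_integral_eq_lintegral_ofReal ((h.intervalIntegrable_weight a b).1)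
    (ae_of_all _ fun x => by positivity)).symm

lemma integrableOn_block_initialWeight (h : IsInitialSlope p v) (k : ℕ) :
    IntegrableOn (fun ξ => (1 + |initialWeight n v ξ|) ^ p) (Ico (k : ℝ) (k + 1)) := by
  have hw := h.measurable_initialWeight n
  refine ⟨(by fun_prop : Measurable _).aestronglyMeasurable, ?_⟩
  rw [hasFiniteIntegral_iff_ofReal (ae_of_all _ fun ξ => by positivity)]
  have bound := h.setLIntegral_initialWeight_le n
    (G := fun y => ENNReal.ofReal ((1 + |y|) ^ p)) (by fun_prop) k (k - 1) (k + 1)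
  have hsub : Ico (k : ℝ) (k + 1) ⊆ Ioc ((k : ℝ) - 1) (k + 1) := fun ξ hξ =>
    ⟨by linarith [hξ.1], hξ.2.le⟩
  rw [inter_eq_right.2 hsub,
    h.lintegral_weight (monotone_initialPosition n (by linarith)),
    h.lintegral_weight (monotone_initialPosition n (by linarith))] at bound
  exact bound.trans_lt (ENNReal.add_lt_top.2 ⟨ENNReal.ofReal_lt_top, ENNReal.ofReal_lt_top⟩)

lemma intervalIntegrable_initialWeight (h : IsInitialSlope p v) (a b : ℝ) :
    IntervalIntegrable (fun ξ => (1 + |initialWeight n v ξ|) ^ p) volume a b := by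
  have hneg : IntegrableOn (fun ξ => (1 + |initialWeight n v ξ|) ^ p) (Ico (min a b) 0) :=
    (integrableOn_const (C := (1 : ℝ)) (by simp) (by simp)).congr_fun
      (fun ξ hξ => by simp [h.initialWeight_of_neg n hξ.2]) measurableSet_Ico
  have hpos : ∀ N : ℕ,
      IntegrableOn (fun ξ => (1 + |initialWeight n v ξ|) ^ p) (Ico (0 : ℝ) N) := fun N => by
    induction N with
    | zero => simp
    | succ N ih =>
      push_cast
      rw [← Ico_union_Ico_eq_Ico N.cast_nonneg (by linarith)]
      exact ih.union (h.integrableOn_block_initialWeight n N)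
  obtain ⟨N, hN⟩ := exists_nat_gt (max a b)
  rw [intervalIntegrable_iff]
  refine (hneg.union (hpos N)).mono_set fun ξ hξ => ?_
  exact (lt_or_ge ξ 0).imp (⟨hξ.1.le, ·⟩) (⟨·, hξ.2.trans_lt hN⟩)

lemma integral_initialWeight_mul_oddPow (h : IsInitialSlope p v) {ξ : ℝ} (hξ : 0 ≤ ξ) (q : ℝ) :
    ∫ η in (0 : ℝ)..ξ, initialWeight n v η * oddPow q (initialStrain n η)
      = ∫ x in (0 : ℝ)..initialPosition n ξ, v x := by
  have hX : 0 ≤ initialPosition n ξ :=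
    (initialPosition_zero n).symm.trans_le (monotone_initialPosition n hξ)
  have transport := (isOntoPrimitive_initialPosition n).setIntegral_mul_comp h.measurable 0 ξ
  rw [initialPosition_zero] at transport
  rw [intervalIntegral.integral_of_le hξ, intervalIntegral.integral_of_le hX, ← transport]
  refine integral_congr_ae (ae_of_all _ fun η => ?_)
  by_cases hη : η ∈ materialLabels n <;> simp [initialStrain, hη, oddPow, initialWeight_of_mem]

end IsInitialSlope

/-! ### Non-collapse of blocks of labels -/

lemma lintegral_enorm_rpow_le {α : Type*} [MeasurableSpace α] {μ : Measure α}
    [IsProbabilityMeasure μ] {f : α → ℝ} {p : ℝ} (hp : 1 ≤ p) (hf : AEStronglyMeasurable f μ) :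
    (∫⁻ a, ‖f a‖ₑ ∂μ) ^ p ≤ ∫⁻ a, ‖f a‖ₑ ^ p ∂μ := by
  have mono := eLpNorm'_le_eLpNorm'_of_exponent_le one_pos hp μ hf
  simp only [eLpNorm'_eq_lintegral_enorm, ENNReal.rpow_one, div_one] at mono
  have hp0 : 0 < p := one_pos.trans_le hp
  simpa [← ENNReal.rpow_mul, hp0.ne'] using ENNReal.rpow_le_rpow mono hp0.le

/-- Over intervals of `[-1, k + 1]` not longer than a cell of the block `[k, k + 1)`, the integral
of `(1 + |v|) ^ p` is at most `ε`. -/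
def CellMassLE (p : ℝ) (v : ℝ → ℝ) (n : ℕ → ℕ+) (k : ℕ) (ε : ℝ) : Prop :=
  ∀ a b : ℝ, -1 ≤ a → a ≤ b → b ≤ k + 1 → b - a ≤ 1 / n k → ∫ x in a..b, (1 + |v x|) ^ p ≤ ε

namespace IsInitialSlope

variable {p : ℝ} {v : ℝ → ℝ} {n : ℕ → ℕ+}

lemma exists_cellMassLE (h : IsInitialSlope p v) {ε : ℕ → ℝ} (hε : ∀ k, 0 < ε k) :
    ∃ n : ℕ → ℕ+, ∀ k, CellMassLE p v n k (ε k) := by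
  have single : ∀ k : ℕ, ∃ m : ℕ+, ∀ a b : ℝ, -1 ≤ a → a ≤ b → b ≤ k + 1 → b - a ≤ 1 / m →
      ∫ x in a..b, (1 + |v x|) ^ p ≤ ε k := fun k => by
    have hcont := intervalIntegral.continuous_primitive h.intervalIntegrable_weight 0
    have huc := (isCompact_Icc (a := (-1 : ℝ)) (b := k + 1)).uniformContinuousOn_of_continuous
      hcont.continuousOn
    obtain ⟨d, hd, hosc⟩ := Metric.uniformContinuousOn_iff.1 huc (ε k) (hε k)
    obtain ⟨m, hm⟩ := exists_nat_one_div_lt hd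
    refine ⟨m.succPNat, fun a b ha hab hb hlen => ?_⟩
    have hdist : dist b a < d := by
      rw [Real.dist_eq, abs_of_nonneg (sub_nonneg.2 hab)]
      exact hlen.trans_lt (by simpa using hm)
    have := hosc b ⟨ha.trans hab, hb⟩ a ⟨ha, hab.trans hb⟩ hdist
    rw [Real.dist_eq, intervalIntegral.integral_interval_sub_left
      (h.intervalIntegrable_weight _ _) (h.intervalIntegrable_weight _ _)] at this
    exact (le_abs_self _).trans this.le
  choose n hn using single
  exact ⟨n, hn⟩

lemma integral_initialWeight_le (h : IsInitialSlope p v) {k : ℕ} {a b : ℝ} (ha : k ≤ a)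
    (hab : a ≤ b) (hb : b < k + 1) :
    ∫ η in a..b, (1 + |initialWeight n v η|) ^ p
      ≤ (∫ x in initialPosition n a..initialPosition n b, (1 + |v x|) ^ p) +
        ∫ x in initialPosition n (a - halfCell n k)..initialPosition n (b - halfCell n k),
          (1 + |v x|) ^ p := by
  have hX := monotone_initialPosition n hab
  have hXshift := monotone_initialPosition n (sub_le_sub_right hab (halfCell n k))
  have hsub : Ioc a b ⊆ Ico (k : ℝ) (k + 1) := fun y hy =>
    ⟨ha.trans hy.1.le, hy.2.trans_lt hb⟩
  have nonneg : ∀ {c d : ℝ}, c ≤ d → 0 ≤ ∫ x in c..d, (1 + |v x|) ^ p := fun hcd =>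
    intervalIntegral.integral_nonneg hcd fun _ _ => by positivity
  have bound := h.setLIntegral_initialWeight_le n
    (G := fun y => ENNReal.ofReal ((1 + |y|) ^ p)) (by fun_prop) k a b
  rw [inter_eq_left.2 hsub, h.lintegral_weight hX, h.lintegral_weight hXshift,
    ← ENNReal.ofReal_add (nonneg hX) (nonneg hXshift),
    ← ofReal_integral_eq_lintegral_ofReal (h.intervalIntegrable_initialWeight n _ _).1
      (ae_of_all _ fun _ => by positivity),
    ENNReal.ofReal_le_ofReal_iff (add_nonneg (nonneg hX) (nonneg hXshift))] at bound
  rwa [intervalIntegral.integral_of_le hab]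

lemma integral_halfCell_weight_le (h : IsInitialSlope p v) {k : ℕ} {ε : ℝ}
    (hcell : CellMassLE p v n k ε) {ξ : ℝ} (hξ : ξ ∈ Ico (k : ℝ) (k + 1) ∩ materialLabels n) :
    ∫ η in ξ..ξ + halfCell n k, (1 + |initialWeight n v η|) ^ p ≤ ε := by
  have hξ0 : 0 ≤ ξ := k.cast_nonneg.trans hξ.1.1
  have hδ := halfCell_pos n k
  have hδ1 := halfCell_le_one n k
  have hξδ : ξ + halfCell n k ∈ Ico (k : ℝ) (k + 1) := (preimage_add_halfCell n k ▸ hξ :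
    ξ ∈ (· + halfCell n k) ⁻¹' (Ico (k : ℝ) (k + 1) \ materialLabels n)).1
  have hlow : -1 ≤ initialPosition n (ξ - halfCell n k) := by
    rw [← initialPosition_of_nonpos n (show (-1 : ℝ) ≤ 0 by norm_num)]
    exact monotone_initialPosition n (by linarith)
  have hup : initialPosition n (ξ + halfCell n k) ≤ k + 1 := by
    have := initialPosition_sub_le n (add_nonneg hξ0 hδ.le)
    rw [initialPosition_zero] at this
    linarith [hξδ.2]
  have hlen : initialPosition n (ξ + halfCell n k) - initialPosition n (ξ - halfCell n k)
      ≤ 1 / n k := by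
    refine (initialPosition_sub_le n (by linarith)).trans_eq ?_
    rw [halfCell]
    field_simp
    ring
  refine le_trans ?_ (hcell _ _ hlow (monotone_initialPosition n (by linarith)) hup hlen)
  refine (h.integral_initialWeight_le hξ.1.1 (by linarith) hξδ.2).trans_eq ?_
  rw [add_sub_cancel_right, add_comm, intervalIntegral.integral_add_adjacent_intervals
    (h.intervalIntegrable_weight _ _) (h.intervalIntegrable_weight _ _)]

/-- A material label and its copy carry the same weight, so their strains differ by `1` up to the
variation of `B` across half a cell: they cannot be compressed simultaneously. -/
lemma one_le_abs_strain_add {S B : ℝ → ℝ}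
    (hS : ∀ ξ, S ξ = initialStrain n ξ + initialWeight n v ξ * B ξ) {k : ℕ} {ξ c : ℝ}
    (hξ : ξ ∈ Ico (k : ℝ) (k + 1) ∩ materialLabels n) (hB : |B ξ - B (ξ + halfCell n k)| ≤ c) :
    1 ≤ |S ξ| + |S (ξ + halfCell n k)| + c * |v (initialPosition n ξ)| := by
  have hcopy : ξ + halfCell n k ∉ materialLabels n := (preimage_add_halfCell n k ▸ hξ :
    ξ ∈ (· + halfCell n k) ⁻¹' (Ico (k : ℝ) (k + 1) \ materialLabels n)).2
  have hmaterial : S ξ = 1 + v (initialPosition n ξ) * B ξ := by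
    simp [hS, initialStrain, hξ.2, initialWeight_of_mem]
  have hrarefaction : S (ξ + halfCell n k) = v (initialPosition n ξ) * B (ξ + halfCell n k) := by
    simp [hS, initialStrain, hcopy, initialWeight_add_halfCell hξ]
  calc (1 : ℝ) = S ξ - S (ξ + halfCell n k)
        - (B ξ - B (ξ + halfCell n k)) * v (initialPosition n ξ) := by
        rw [hmaterial, hrarefaction]
        ring
    _ ≤ |S ξ - S (ξ + halfCell n k)| + |(B ξ - B (ξ + halfCell n k)) * v (initialPosition n ξ)| :=
        (le_abs_self _).trans (abs_sub _ _)
    _ ≤ _ := by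
        rw [abs_mul]
        gcongr
        exact abs_sub _ _

lemma setLIntegral_abs_slope_le (h : IsInitialSlope p v) (hp : 1 ≤ p) (k : ℕ) :
    ∫⁻ ξ in Ico (k : ℝ) (k + 1) ∩ materialLabels n, ‖v (initialPosition n ξ)‖ₑ
      ≤ ENNReal.ofReal (∫ x in (0 : ℝ)..k + 1, (1 + |v x|) ^ p) := by
  have hk : (0 : ℝ) ≤ k + 1 := by positivity
  have hXk : 0 ≤ initialPosition n k := by
    rw [initialPosition_natCast]
    positivity
  have hXk' : initialPosition n (k + 1) ≤ k + 1 := by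
    simpa using initialPosition_sub_le n hk
  have hweight : ∀ x, ‖v x‖ₑ ≤ ENNReal.ofReal ((1 + |v x|) ^ p) := fun x => by
    rw [← ofReal_norm, Real.norm_eq_abs]
    exact ENNReal.ofReal_le_ofReal ((le_add_of_nonneg_left zero_le_one).trans
      (self_le_rpow_of_one_le (by linarith [abs_nonneg (v x)]) hp))
  calc ∫⁻ ξ in Ico (k : ℝ) (k + 1) ∩ materialLabels n, ‖v (initialPosition n ξ)‖ₑ
      = ∫⁻ ξ in Ioc (k : ℝ) (k + 1) ∩ materialLabels n, ‖v (initialPosition n ξ)‖ₑ :=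
        setLIntegral_congr (Ico_ae_eq_Ioc.inter (ae_eq_refl _))
    _ = ∫⁻ x in Ioc (initialPosition n k) (initialPosition n (k + 1)), ‖v x‖ₑ :=
        h.setLIntegral_Ioc_inter_materialLabels n measurable_enorm k (k + 1)
    _ ≤ ∫⁻ x in Ioc 0 ((k : ℝ) + 1), ‖v x‖ₑ := lintegral_mono_set (Ioc_subset_Ioc hXk hXk')
    _ ≤ ∫⁻ x in Ioc 0 ((k : ℝ) + 1), ENNReal.ofReal ((1 + |v x|) ^ p) := lintegral_mono hweight
    _ = _ := h.lintegral_weight hk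

lemma volume_block_le_lintegral_strain (h : IsInitialSlope p v) {S B : ℝ → ℝ} (hB : Measurable B)
    (hS : ∀ ξ, S ξ = initialStrain n ξ + initialWeight n v ξ * B ξ) {k : ℕ} {c : ℝ} (hc : 0 ≤ c)
    (hBc : ∀ ξ ∈ Ico (k : ℝ) (k + 1) ∩ materialLabels n, |B ξ - B (ξ + halfCell n k)| ≤ c) :
    2⁻¹ ≤ (∫⁻ ξ in Ico (k : ℝ) (k + 1), ‖S ξ‖ₑ) + ENNReal.ofReal c *
      ∫⁻ ξ in Ico (k : ℝ) (k + 1) ∩ materialLabels n, ‖v (initialPosition n ξ)‖ₑ := by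
  have hSm : Measurable S := by
    rw [funext hS]
    exact (measurable_initialStrain n).add ((h.measurable_initialWeight n).mul hB)
  have hm := measurableSet_materialLabels n
  have pointwise : ∀ ξ ∈ Ico (k : ℝ) (k + 1) ∩ materialLabels n, (1 : ℝ≥0∞) ≤
      ‖S ξ‖ₑ + ‖S (ξ + halfCell n k)‖ₑ + ENNReal.ofReal c * ‖v (initialPosition n ξ)‖ₑ :=
    fun ξ hξ => by
      simp only [← ofReal_norm, Real.norm_eq_abs]
      rw [← ENNReal.ofReal_mul hc, ← ENNReal.ofReal_add (abs_nonneg _) (abs_nonneg _),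
        ← ENNReal.ofReal_add (by positivity) (by positivity), ← ENNReal.ofReal_one]
      exact ENNReal.ofReal_le_ofReal (one_le_abs_strain_add hS hξ (hBc ξ hξ))
  have copies := setLIntegral_inter_diff_materialLabels n k univ fun ξ => ‖S ξ‖ₑ
  rw [preimage_univ, univ_inter, univ_inter] at copies
  rw [← lintegral_inter_add_sdiff _ (Ico (k : ℝ) (k + 1)) hm, copies,
    ← volume_block_inter_materialLabels n k, ← lintegral_const_mul' _ _ ENNReal.ofReal_ne_top,
    ← lintegral_add_left (by fun_prop), ← lintegral_add_left (by fun_prop)]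
  calc volume (Ico (k : ℝ) (k + 1) ∩ materialLabels n)
      = ∫⁻ _ in Ico (k : ℝ) (k + 1) ∩ materialLabels n, 1 := by simp
    _ ≤ _ := setLIntegral_mono' (measurableSet_Ico.inter hm) pointwise

/-- However the material labels of a block are compressed, their rarefaction copies expand, so the
block keeps a definite length. -/
lemma four_inv_rpow_le_integral_strain (h : IsInitialSlope p v) (hp : 1 ≤ p) {S B : ℝ → ℝ}
    (hB : Measurable B) (hS : ∀ ξ, S ξ = initialStrain n ξ + initialWeight n v ξ * B ξ)
    {k : ℕ} {c : ℝ} (hc : 0 ≤ c)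
    (hBc : ∀ ξ ∈ Ico (k : ℝ) (k + 1) ∩ materialLabels n, |B ξ - B (ξ + halfCell n k)| ≤ c)
    (hsmall : c * ∫ x in (0 : ℝ)..k + 1, (1 + |v x|) ^ p ≤ 4⁻¹)
    (hint : IntervalIntegrable (fun ξ => |S ξ| ^ p) volume k (k + 1)) :
    (4⁻¹ : ℝ) ^ p ≤ ∫ ξ in (k : ℝ)..k + 1, |S ξ| ^ p := by
  have hSm : Measurable S := by
    rw [funext hS]
    exact (measurable_initialStrain n).add ((h.measurable_initialWeight n).mul hB)
  have hprob : IsProbabilityMeasure (volume.restrict (Ico (k : ℝ) (k + 1))) := ⟨by simp⟩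
  have hstrain : ENNReal.ofReal 4⁻¹ ≤ ∫⁻ ξ in Ico (k : ℝ) (k + 1), ‖S ξ‖ₑ := by
    have hslope : ENNReal.ofReal c * ∫⁻ ξ in Ico (k : ℝ) (k + 1) ∩ materialLabels n,
        ‖v (initialPosition n ξ)‖ₑ ≤ ENNReal.ofReal 4⁻¹ := by
      refine (mul_le_mul_right (h.setLIntegral_abs_slope_le hp k) _).trans ?_
      rw [← ENNReal.ofReal_mul hc]
      exact ENNReal.ofReal_le_ofReal hsmall
    have hhalf : (2⁻¹ : ℝ≥0∞) = ENNReal.ofReal 4⁻¹ + ENNReal.ofReal 4⁻¹ := by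
      rw [← ENNReal.ofReal_add (by norm_num) (by norm_num),
        show (4⁻¹ + 4⁻¹ : ℝ) = 2⁻¹ by norm_num, ENNReal.ofReal_inv_of_pos two_pos,
        ENNReal.ofReal_ofNat]
    exact ENNReal.le_of_add_le_add_right ENNReal.ofReal_ne_top <| hhalf.symm.trans_le <|
      (h.volume_block_le_lintegral_strain hB hS hc hBc).trans (add_le_add_right hslope _)
  have hlength : ∫⁻ ξ in Ico (k : ℝ) (k + 1), ‖S ξ‖ₑ ^ p
      = ENNReal.ofReal (∫ ξ in (k : ℝ)..k + 1, |S ξ| ^ p) := by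
    rw [intervalIntegral.integral_of_le (by linarith), ofReal_integral_eq_lintegral_ofReal hint.1
      (ae_of_all _ fun ξ => by positivity), setLIntegral_congr Ico_ae_eq_Ioc]
    exact lintegral_congr fun ξ => by
      rw [← ofReal_norm, ENNReal.ofReal_rpow_of_nonneg (norm_nonneg _) (by linarith),
        Real.norm_eq_abs]
  have powerMean := (ENNReal.rpow_le_rpow hstrain (by linarith)).trans
    (lintegral_enorm_rpow_le hp hSm.aestronglyMeasurable)
  rw [hlength, ENNReal.ofReal_rpow_of_nonneg (by norm_num) (by linarith)] at powerMean
  exact (ENNReal.ofReal_le_ofReal_iff (intervalIntegral.integral_nonneg (by linarith)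
    fun ξ _ => by positivity)).1 powerMean

end IsInitialSlope

/-! ### Characteristics -/

namespace LagrangianData

/-- The position at time `t` of the characteristic with label `ξ`. -/
noncomputable def X (D : LagrangianData) (A : ℝ → ℝ → ℝ) (ξ t : ℝ) : ℝ :=
  D.F 0 * t + ∫ η in (0 : ℝ)..ξ, D.lengthDensity A η t

lemma IsAdmissible.X_sub {D : LagrangianData} {A : ℝ → ℝ → ℝ} (hA : D.IsAdmissible A)
    (ξ η t : ℝ) : D.X A ξ t - D.X A η t = ∫ y in η..ξ, D.lengthDensity A y t := by
  rw [X, X, add_sub_add_left_eq_sub]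
  exact intervalIntegral.integral_interval_sub_left
    (hA.intervalIntegrable_lengthDensity _ _ _) (hA.intervalIntegrable_lengthDensity _ _ _)

/-- A global solution of the Lagrangian system whose characteristics exhaust the line at every
time. The labels `ξ < 0` carry the zero solution. -/
structure IsFlow (D : LagrangianData) (A : ℝ → ℝ → ℝ) : Prop where
  isAdmissible : D.IsAdmissible A
  picard_eq : D.picard A = A
  s₀_of_neg : ∀ ξ < 0, D.s₀ ξ = 1
  w_of_neg : ∀ ξ < 0, D.w ξ = 0
  tendsto_X : ∀ t, Tendsto (fun ξ => D.X A ξ t) atTop atTop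

namespace IsFlow

variable {D : LagrangianData} {A : ℝ → ℝ → ℝ}

lemma hasDerivAt_strain (h : D.IsFlow A) (ξ t : ℝ) :
    HasDerivAt (D.strain A ξ) (D.w ξ * D.g (D.U A ξ t) / D.p) t := by
  have hg := h.isAdmissible.continuous_g_U_time ξ
  have hA : HasDerivAt (D.picard A ξ) (D.g (D.U A ξ t)) t :=
    (hg.integral_hasStrictDerivAt 0 t).hasDerivAt
  rw [h.picard_eq] at hA
  exact ((hA.const_mul (D.w ξ)).div_const D.p).const_add (D.s₀ ξ)

lemma hasDerivAt_lengthDensity (h : D.IsFlow A) (ξ t : ℝ) :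
    HasDerivAt (D.lengthDensity A ξ) (D.g (D.U A ξ t) * D.slopeDensity A ξ t) t := by
  refine ((hasDerivAt_abs_rpow (D.strain A ξ t) (by linarith [D.two_le_p])).comp t
    (h.hasDerivAt_strain ξ t)).congr_deriv ?_
  have := D.p_pos
  unfold slopeDensity oddPow
  field_simp

lemma hasDerivAt_slopeDensity (h : D.IsFlow A) (ξ t : ℝ) :
    HasDerivAt (D.slopeDensity A ξ)
      ((1 - 1 / D.p) * D.g (D.U A ξ t) * (D.w ξ ^ 2 * |D.strain A ξ t| ^ (D.p - 2))) t := by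
  refine (((hasDerivAt_oddPow D.two_le_p (D.strain A ξ t)).comp t
    (h.hasDerivAt_strain ξ t)).const_mul (D.w ξ)).congr_deriv ?_
  have := D.p_pos
  field_simp

lemma hasDerivAt_X (h : D.IsFlow A) (ξ t : ℝ) :
    HasDerivAt (D.X A ξ) (D.F (D.U A ξ t)) t := by
  have hA := h.isAdmissible
  have hp1 : 0 ≤ D.p - 1 := by linarith [D.two_le_p]
  have hU : ∫ η in (0 : ℝ)..ξ, D.g (D.U A η t) * D.slopeDensity A η t
      = D.F (D.U A ξ t) - D.F 0 :=
    integral_comp_primitive D.hasDerivAt_F D.lipschitz_F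
      (fun a b => hA.intervalIntegrable_slopeDensity t a b) 0 ξ
  have hint := (intervalIntegral.hasDerivAt_integral_of_dominated_loc_of_deriv_le
    (F := fun t η => D.lengthDensity A η t)
    (F' := fun t η => D.g (D.U A η t) * D.slopeDensity A η t)
    (bound := fun η => D.M * (D.growth (|t| + 1) ^ (D.p - 1) * (1 + |D.w η|) ^ D.p))
    (Metric.ball_mem_nhds t one_pos)
    (Eventually.of_forall fun t =>
      (hA.measurable_lengthDensity.comp measurable_prodMk_right).aestronglyMeasurable)
    (hA.intervalIntegrable_lengthDensity t 0 ξ)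
    ((hA.continuous_g_U.measurable.comp measurable_prodMk_right).mul
      (hA.measurable_slopeDensity.comp measurable_prodMk_right)).aestronglyMeasurable
    (ae_of_all _ fun η _ τ hτ => ?_)
    (((D.intervalIntegrable_weight 0 ξ).const_mul _).const_mul _)
    (ae_of_all _ fun η _ τ _ => h.hasDerivAt_lengthDensity η τ)).2
  · rw [hU] at hint
    exact (((hasDerivAt_id t).const_mul (D.F 0)).add hint).congr_deriv (by ring)
  · have hτt : |τ| ≤ |t| + 1 := by
      have := Real.dist_eq τ t ▸ Metric.mem_ball.1 hτ
      linarith [abs_sub_abs_le_abs_sub τ t]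
    rw [norm_mul]
    refine mul_le_mul (D.abs_g_le _) ((hA.abs_slopeDensity_le η τ).trans ?_) (norm_nonneg _)
      D.M_nonneg
    have := (D.growth_pos τ).le
    have := D.growth_mono (hτt.trans (le_abs_self _))
    gcongr

lemma continuous_X (h : D.IsFlow A) : Continuous (Function.uncurry (D.X A)) := by
  refine continuous_uncurry_of_modulus (D.continuous_growth_rpow D.p_pos.le) D.continuous_modulus
    (fun ξ => continuous_iff_continuousAt.2 fun t => (h.hasDerivAt_X ξ t).continuousAt)
    (fun ξ η t => ?_)
  rw [Real.dist_eq, Real.dist_eq, h.isAdmissible.X_sub]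
  refine D.abs_integral_le_modulus (rpow_nonneg (D.growth_pos t).le _) fun y _ => ?_
  rw [abs_of_nonneg (lengthDensity_nonneg y t)]
  exact h.isAdmissible.lengthDensity_le y t

lemma U_of_nonpos (h : D.IsFlow A) {ξ : ℝ} (hξ : ξ ≤ 0) (t : ℝ) : D.U A ξ t = 0 := by
  refine intervalIntegral.integral_zero_ae ?_
  filter_upwards [Measure.ae_ne volume (0 : ℝ)] with x hx hx'
  rw [uIoc_of_ge hξ] at hx'
  rw [slopeDensity, h.w_of_neg x (lt_of_le_of_ne hx'.2 hx), zero_mul]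

lemma X_of_nonpos (h : D.IsFlow A) {ξ : ℝ} (hξ : ξ ≤ 0) (t : ℝ) :
    D.X A ξ t = D.F 0 * t + ξ := by
  rw [X, intervalIntegral.integral_congr_ae (g := fun _ => 1) ?_]
  · simp
  filter_upwards [Measure.ae_ne volume (0 : ℝ)] with x hx hx'
  rw [uIoc_of_ge hξ] at hx'
  have hx0 := lt_of_le_of_ne hx'.2 hx
  simp [lengthDensity, strain, h.w_of_neg x hx0, h.s₀_of_neg x hx0]

lemma isOntoPrimitive_X (h : D.IsFlow A) (t : ℝ) :
    IsOntoPrimitive (fun ξ => D.X A ξ t) fun ξ => D.lengthDensity A ξ t where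
  measurable := h.isAdmissible.measurable_lengthDensity.comp measurable_prodMk_right
  nonneg ξ := lengthDensity_nonneg ξ t
  intervalIntegrable := h.isAdmissible.intervalIntegrable_lengthDensity t
  integral_eq_sub a b := (h.isAdmissible.X_sub b a t).symm
  surjective := by
    refine (h.continuous_X.comp (Continuous.prodMk_left t)).surjective (h.tendsto_X t) ?_
    exact (tendsto_atBot_add_const_left _ (D.F 0 * t) tendsto_id).congr'
      ((eventually_le_atBot 0).mono fun ξ hξ => (h.X_of_nonpos hξ t).symm)

lemma U_eq_of_X_eq (h : D.IsFlow A) {a b t : ℝ} (hX : D.X A a t = D.X A b t) :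
    D.U A a t = D.U A b t := by
  wlog hab : a ≤ b generalizing a b
  · exact (this hX.symm (not_le.1 hab).le).symm
  have hlength : ∫ ξ in Ioc a b, D.lengthDensity A ξ t = 0 := by
    rw [← intervalIntegral.integral_of_le hab, ← h.isAdmissible.X_sub, hX, sub_self]
  rw [setIntegral_eq_zero_iff_of_nonneg_ae (ae_of_all _ fun ξ => lengthDensity_nonneg ξ t)
    ((intervalIntegrable_iff_integrableOn_Ioc_of_le hab).1
      (h.isAdmissible.intervalIntegrable_lengthDensity t a b))] at hlength
  rw [eq_comm, ← sub_eq_zero, h.isAdmissible.U_sub, intervalIntegral.integral_of_le hab]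
  refine integral_eq_zero_of_ae ?_
  filter_upwards [hlength] with ξ hξ
  have hstrain : D.strain A ξ t = 0 := by
    simpa using (Real.rpow_eq_zero (abs_nonneg _) D.p_pos.ne').1 hξ
  simp [slopeDensity, hstrain, oddPow]

end IsFlow

end LagrangianData

/-! ### Eulerian variables -/

namespace LagrangianData

/-- The last label located at or to the left of `x` at time `t`: a right inverse of
`ξ ↦ X(ξ,t)`. -/
noncomputable def label (D : LagrangianData) (A : ℝ → ℝ → ℝ) (x t : ℝ) : ℝ :=
  sSup {ξ | D.X A ξ t ≤ x}

/-- The solution `u(x,t)` in the original variables. -/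
noncomputable def u (D : LagrangianData) (A : ℝ → ℝ → ℝ) (x t : ℝ) : ℝ :=
  D.U A (D.label A x t) t

/-- The slope `u_x = w / S` in the original variables; it is `0` where the strain vanishes. -/
noncomputable def slope (D : LagrangianData) (A : ℝ → ℝ → ℝ) (x t : ℝ) : ℝ :=
  D.w (D.label A x t) / D.strain A (D.label A x t) t

/-- The map `(ξ,t) ↦ (X(ξ,t),t)` from Lagrangian to Eulerian variables. -/
noncomputable def flowMap (D : LagrangianData) (A : ℝ → ℝ → ℝ) (q : ℝ × ℝ) : ℝ × ℝ :=
  (D.X A q.1 q.2, q.2)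

namespace IsFlow

variable {D : LagrangianData} {A : ℝ → ℝ → ℝ}

lemma isProperMap_flowMap (h : D.IsFlow A) : IsProperMap (D.flowMap A) :=
  isProperMap_prodMk_snd_of_monotone h.continuous_X (fun t => (h.isOntoPrimitive_X t).monotone)
    fun t => (h.isOntoPrimitive_X t).surjective

lemma bddAbove_setOf_X_le (h : D.IsFlow A) (x t : ℝ) : BddAbove {ξ | D.X A ξ t ≤ x} := by
  obtain ⟨b, hb⟩ := ((h.tendsto_X t).eventually_gt_atTop x).exists
  exact ⟨b, fun ξ hξ => ((h.isOntoPrimitive_X t).monotone.reflect_lt (hξ.trans_lt hb)).le⟩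

lemma X_label (h : D.IsFlow A) (x t : ℝ) : D.X A (D.label A x t) t = x := by
  have hX := h.isOntoPrimitive_X t
  obtain ⟨ξ, hξ⟩ := hX.surjective x
  have hbdd := h.bddAbove_setOf_X_le x t
  refine le_antisymm ?_ (hξ.ge.trans (hX.monotone (le_csSup hbdd hξ.le)))
  exact (isClosed_le hX.continuous continuous_const).csSup_mem ⟨ξ, hξ.le⟩ hbdd

lemma le_label_iff (h : D.IsFlow A) {ξ x t : ℝ} : ξ ≤ D.label A x t ↔ D.X A ξ t ≤ x :=
  ⟨fun hξ => ((h.isOntoPrimitive_X t).monotone hξ).trans_eq (h.X_label x t),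
    fun hξ => le_csSup (h.bddAbove_setOf_X_le x t) hξ⟩

lemma measurable_label (h : D.IsFlow A) : Measurable fun q : ℝ × ℝ => D.label A q.1 q.2 := by
  refine measurable_of_Ici fun ξ => ?_
  have hpre : (fun q : ℝ × ℝ => D.label A q.1 q.2) ⁻¹' Ici ξ = {q | D.X A ξ q.2 ≤ q.1} := by
    ext q
    exact h.le_label_iff
  rw [hpre]
  exact (isClosed_le (h.continuous_X.comp (continuous_const.prodMk continuous_snd))
    continuous_fst).measurableSet

lemma measurable_slope (h : D.IsFlow A) : Measurable fun q : ℝ × ℝ => D.slope A q.1 q.2 :=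
  (D.measurable_w.comp h.measurable_label).div
    (h.isAdmissible.measurable_strain.comp (h.measurable_label.prodMk measurable_snd))

lemma u_X (h : D.IsFlow A) (ξ t : ℝ) : D.u A (D.X A ξ t) t = D.U A ξ t :=
  h.U_eq_of_X_eq (h.X_label _ t)

/- The flow map is a quotient map and `u` is induced by `U`. -/
lemma continuous_u (h : D.IsFlow A) : Continuous fun q : ℝ × ℝ => D.u A q.1 q.2 := by
  have hquot : IsQuotientMap (D.flowMap A) :=
    h.isProperMap_flowMap.isClosedMap.isQuotientMap h.isProperMap_flowMap.continuous
      fun q => ⟨(D.label A q.1 q.2, q.2), Prod.ext (h.X_label q.1 q.2) rfl⟩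
  refine hquot.continuous_iff.2 ?_
  have hcomp : (fun q : ℝ × ℝ => D.u A q.1 q.2) ∘ D.flowMap A = Function.uncurry (D.U A) :=
    funext fun q => h.u_X q.1 q.2
  exact hcomp ▸ h.isAdmissible.continuous_U

/- A label that is not the last one at its position shares it with a rational label, and the
countably many positions of rational labels carry no length. -/
lemma ae_label_X (h : D.IsFlow A) (t : ℝ) :
    ∀ᵐ ξ, D.strain A ξ t ≠ 0 → D.label A (D.X A ξ t) t = ξ := by
  have hX := h.isOntoPrimitive_X t
  have hrat := (countable_range fun r : ℚ => D.X A r t).ae_notMem volume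
  rw [← hX.map_labelMeasure] at hrat
  have hlabel := ae_of_ae_map hX.continuous.aemeasurable hrat
  rw [labelMeasure, ae_withDensity_iff hX.measurable.ennreal_ofReal] at hlabel
  filter_upwards [hlabel] with ξ hξ hS
  have hnot := hξ (ENNReal.ofReal_pos.2 (rpow_pos_of_pos (abs_pos.2 hS) D.p)).ne'
  refine le_antisymm (not_lt.1 fun hlt => ?_) (h.le_label_iff.2 le_rfl)
  obtain ⟨r, hξr, hr⟩ := exists_rat_btwn hlt
  exact hnot ⟨r, le_antisymm (h.le_label_iff.1 hr.le) (hX.monotone hξr.le)⟩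

lemma lintegral_abs_slope_rpow_le (h : D.IsFlow A) (a b t : ℝ) :
    ∫⁻ x in Ioc (D.X A a t) (D.X A b t), ENNReal.ofReal (|D.slope A x t| ^ D.p)
      ≤ ∫⁻ ξ in Ioc a b, ENNReal.ofReal ((1 + |D.w ξ|) ^ D.p) := by
  have hp := D.p_pos
  have hslope : Measurable fun x => D.slope A x t := h.measurable_slope.comp measurable_prodMk_right
  rw [← (h.isOntoPrimitive_X t).lintegral_mul_comp (by fun_prop) a b]
  refine lintegral_mono_ae ?_
  filter_upwards [ae_restrict_of_ae (h.ae_label_X t)] with ξ hξ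
  rw [← ENNReal.ofReal_mul (lengthDensity_nonneg ξ t)]
  refine ENNReal.ofReal_le_ofReal ?_
  rcases eq_or_ne (D.strain A ξ t) 0 with h0 | h0
  · rw [lengthDensity, h0, abs_zero, zero_rpow hp.ne', zero_mul]
    positivity
  · rw [slope, hξ h0, lengthDensity, ← mul_rpow (abs_nonneg _) (abs_nonneg _), ← abs_mul,
      mul_div_cancel₀ _ h0]
    gcongr
    linarith

lemma memLp_slope (h : D.IsFlow A) (t x y : ℝ) :
    MemLp (fun z => D.slope A z t) (ENNReal.ofReal D.p) (volume.restrict (Ioc x y)) := by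
  have hp := D.p_pos
  have hslope : Measurable fun z => D.slope A z t := h.measurable_slope.comp measurable_prodMk_right
  obtain ⟨a, rfl⟩ := (h.isOntoPrimitive_X t).surjective x
  obtain ⟨b, rfl⟩ := (h.isOntoPrimitive_X t).surjective y
  rw [← integrable_norm_rpow_iff hslope.aestronglyMeasurable (by simpa using hp)
    ENNReal.ofReal_ne_top, ENNReal.toReal_ofReal hp.le]
  refine ⟨(by fun_prop : Measurable _).aestronglyMeasurable, ?_⟩
  rw [hasFiniteIntegral_iff_ofReal (ae_of_all _ fun z => by positivity)]
  exact (h.lintegral_abs_slope_rpow_le a b t).trans_lt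
    (D.intervalIntegrable_weight a b).1.lintegral_lt_top

lemma integrableOn_abs_slope_rpow (h : D.IsFlow A) (t x y : ℝ) :
    IntegrableOn (fun z => |D.slope A z t| ^ D.p) (Ioc x y) := by
  have := (h.memLp_slope t x y).integrable_norm_rpow (by simpa using D.p_pos)
    ENNReal.ofReal_ne_top
  rwa [ENNReal.toReal_ofReal D.p_pos.le] at this

lemma intervalIntegrable_slope (h : D.IsFlow A) (t x y : ℝ) :
    IntervalIntegrable (fun z => D.slope A z t) volume x y := by
  have hp : 1 ≤ ENNReal.ofReal D.p := by
    rw [ENNReal.one_le_ofReal]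
    linarith [D.two_le_p]
  exact ⟨(h.memLp_slope t x y).integrable hp, (h.memLp_slope t y x).integrable hp⟩

lemma integral_slope (h : D.IsFlow A) (t : ℝ) {x y : ℝ} (hxy : x ≤ y) :
    ∫ z in x..y, D.slope A z t = D.u A y t - D.u A x t := by
  have hslope : Measurable fun z => D.slope A z t := h.measurable_slope.comp measurable_prodMk_right
  have hlabel : D.label A x t ≤ D.label A y t := by rwa [h.le_label_iff, h.X_label]
  rw [u, u, h.isAdmissible.U_sub, intervalIntegral.integral_of_le hxy,
    intervalIntegral.integral_of_le hlabel]
  have htransport := (h.isOntoPrimitive_X t).setIntegral_mul_comp hslope (D.label A x t)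
    (D.label A y t)
  rw [h.X_label, h.X_label] at htransport
  rw [← htransport]
  refine integral_congr_ae ?_
  filter_upwards [ae_restrict_of_ae (h.ae_label_X t)] with ξ hξ
  rcases eq_or_ne (D.strain A ξ t) 0 with h0 | h0
  · simp [lengthDensity, slopeDensity, h0, oddPow, zero_rpow D.p_pos.ne']
  · rw [slope, hξ h0, lengthDensity, slopeDensity, abs_rpow_mul_div]

/- Here `f'(0) ≥ 0` enters: at time `t ≥ 0` the position `0` is occupied by a nonpositive label. -/
lemma u_zero (h : D.IsFlow A) (hF : 0 ≤ D.F 0) {t : ℝ} (ht : 0 ≤ t) : D.u A 0 t = 0 := by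
  have hξ : -(D.F 0 * t) ≤ 0 := neg_nonpos.2 (mul_nonneg hF ht)
  have hX : D.X A (-(D.F 0 * t)) t = 0 := by rw [h.X_of_nonpos hξ, add_neg_cancel]
  have hu := h.u_X (-(D.F 0 * t)) t
  rwa [hX, h.U_of_nonpos hξ] at hu

lemma exists_abs_u_sub_le (h : D.IsFlow A) (t a b : ℝ) :
    ∃ C : ℝ, ∀ x ∈ Icc a b, ∀ y ∈ Icc a b,
      |D.u A x t - D.u A y t| ≤ C * |x - y| ^ (1 - 1 / D.p) := by
  have hp := D.two_le_p
  refine ⟨(∫ z in Ioc a b, |D.slope A z t| ^ D.p) ^ (1 / D.p), fun x hx y hy => ?_⟩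
  wlog hxy : x ≤ y generalizing x y
  · rw [abs_sub_comm, abs_sub_comm x]
    exact this y hy x hx (le_of_not_ge hxy)
  have hHolder := abs_intervalIntegral_le_rpow (a := x) (b := y) (by linarith)
    (uIoc_of_le hxy ▸ h.memLp_slope t x y)
  rw [h.integral_slope t hxy, uIoc_of_le hxy, abs_sub_comm, abs_sub_comm y] at hHolder
  refine hHolder.trans ?_
  gcongr ?_ ^ _ * _
  exact setIntegral_mono_set (h.integrableOn_abs_slope_rpow t a b)
    (ae_of_all _ fun z => by positivity) (Ioc_subset_Ioc hx.1 hy.2).eventuallyLE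

end IsFlow

end LagrangianData

/-! ### The weak formulation -/

lemma locallyIntegrable_of_abs_le_mul {k : ℝ × ℝ → ℝ} {b c : ℝ → ℝ} (hk : Measurable k)
    (hb : ∀ x y, IntervalIntegrable b volume x y) (hc : Continuous c)
    (h : ∀ q : ℝ × ℝ, |k q| ≤ b q.1 * c q.2) : LocallyIntegrable k := by
  intro q
  refine ⟨Ioc (q.1 - 1) (q.1 + 1) ×ˢ Icc (q.2 - 1) (q.2 + 1),
    prod_mem_nhds (Ioc_mem_nhds (by linarith) (by linarith))
      (Icc_mem_nhds (by linarith) (by linarith)), ?_⟩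
  have hbc := (hb (q.1 - 1) (q.1 + 1)).1.mul_prod
    (hc.integrableOn_Icc (μ := volume) (a := q.2 - 1) (b := q.2 + 1))
  rw [Measure.prod_restrict, ← Measure.volume_eq_prod] at hbc
  exact hbc.mono' hk.aestronglyMeasurable (ae_of_all _ h)

section TestFunction

variable {φ : ℝ × ℝ → ℝ}

lemma continuous_px (hφ : ContDiff ℝ 1 φ) : Continuous (px φ) :=
  (hφ.continuous_fderiv one_ne_zero).clm_apply continuous_const

lemma continuous_pt (hφ : ContDiff ℝ 1 φ) : Continuous (pt φ) :=
  (hφ.continuous_fderiv one_ne_zero).clm_apply continuous_const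

lemma px_of_notMem_tsupport {q : ℝ × ℝ} (hq : q ∉ tsupport φ) : px φ q = 0 := by
  rw [px, image_eq_zero_of_notMem_tsupport fun hq' => hq (tsupport_fderiv_subset ℝ hq')]
  rfl

lemma pt_of_notMem_tsupport {q : ℝ × ℝ} (hq : q ∉ tsupport φ) : pt φ q = 0 := by
  rw [pt, image_eq_zero_of_notMem_tsupport fun hq' => hq (tsupport_fderiv_subset ℝ hq')]
  rfl

lemma hasDerivAt_comp_curve (hφ : ContDiff ℝ 1 φ) {x : ℝ → ℝ} {x' t : ℝ}
    (hx : HasDerivAt x x' t) :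
    HasDerivAt (fun t => φ (x t, t)) (pt φ (x t, t) + x' * px φ (x t, t)) t := by
  have hcurve : HasDerivAt (fun t => (x t, t)) (x', (1 : ℝ)) t := hx.prodMk (hasDerivAt_id t)
  refine (HasFDerivAt.comp_hasDerivAt (f := fun t => (x t, t)) t
    (hφ.differentiable one_ne_zero (x t, t)).hasFDerivAt hcurve).congr_deriv ?_
  have hdir : ((x', 1) : ℝ × ℝ) = (0, 1) + x' • (1, 0) := by simp
  rw [hdir, map_add, map_smul, smul_eq_mul, pt, px]

end TestFunction

namespace LagrangianData

/-- The integrand of the weak formulation; `1 / p` is the parameter `λ` of the equation. -/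
noncomputable def weakIntegrand (D : LagrangianData) (A : ℝ → ℝ → ℝ) (φ : ℝ × ℝ → ℝ)
    (q : ℝ × ℝ) : ℝ :=
  -(D.slope A q.1 q.2) * (pt φ q + D.F (D.u A q.1 q.2) * px φ q)
    + (1 / D.p - 1) * D.g (D.u A q.1 q.2) * (D.slope A q.1 q.2) ^ 2 * φ q

/-- The time derivative of `U_ξ φ(X,t)` along a characteristic, where `U_ξ = w |S|^(p-2) S`. -/
noncomputable def fluxRate (D : LagrangianData) (A : ℝ → ℝ → ℝ) (φ : ℝ × ℝ → ℝ) (ξ t : ℝ) : ℝ :=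
  (1 - 1 / D.p) * D.g (D.U A ξ t) * (D.w ξ ^ 2 * |D.strain A ξ t| ^ (D.p - 2)) *
      φ (D.X A ξ t, t)
    + D.slopeDensity A ξ t *
      (pt φ (D.X A ξ t, t) + D.F (D.U A ξ t) * px φ (D.X A ξ t, t))

lemma continuous_F (D : LagrangianData) : Continuous D.F :=
  continuous_iff_continuousAt.2 fun a => (D.hasDerivAt_F a).continuousAt

namespace IsFlow

variable {D : LagrangianData} {A : ℝ → ℝ → ℝ} {φ : ℝ × ℝ → ℝ}

lemma map_flowMap (h : D.IsFlow A) :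
    (volume.withDensity fun q : ℝ × ℝ => ENNReal.ofReal (D.lengthDensity A q.1 q.2)).map
      (D.flowMap A) = volume := by
  rw [Measure.volume_eq_prod]
  exact IsOntoPrimitive.map_prodMk_withDensity h.continuous_X.measurable
    h.isAdmissible.measurable_lengthDensity h.isOntoPrimitive_X

lemma hasDerivAt_slopeDensity_mul (h : D.IsFlow A) (hφ : ContDiff ℝ 1 φ) (ξ t : ℝ) :
    HasDerivAt (fun t => D.slopeDensity A ξ t * φ (D.X A ξ t, t)) (D.fluxRate A φ ξ t) t :=
  (h.hasDerivAt_slopeDensity ξ t).mul (hasDerivAt_comp_curve hφ (h.hasDerivAt_X ξ t))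

lemma ae_label_X_prod (h : D.IsFlow A) :
    ∀ᵐ q : ℝ × ℝ, D.strain A q.1 q.2 ≠ 0 → D.label A (D.X A q.1 q.2) q.2 = q.1 := by
  have hmeas : MeasurableSet {q : ℝ × ℝ |
      D.strain A q.1 q.2 ≠ 0 → D.label A (D.X A q.1 q.2) q.2 = q.1} := by
    refine (measurableSet_eq_fun h.isAdmissible.measurable_strain measurable_const).compl.imp ?_
    exact measurableSet_eq_fun (h.measurable_label.comp h.isProperMap_flowMap.continuous.measurable)
      measurable_fst
  rw [Measure.volume_eq_prod, Measure.ae_prod_iff_ae_ae hmeas, Measure.ae_ae_comm hmeas]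
  exact ae_of_all _ h.ae_label_X

lemma ae_w_mul_g_eq_zero (h : D.IsFlow A) :
    ∀ᵐ q : ℝ × ℝ, D.strain A q.1 q.2 = 0 → D.w q.1 * D.g (D.U A q.1 q.2) = 0 := by
  have hmeas : MeasurableSet {q : ℝ × ℝ |
      D.strain A q.1 q.2 = 0 → D.w q.1 * D.g (D.U A q.1 q.2) = 0} := by
    refine (measurableSet_eq_fun h.isAdmissible.measurable_strain measurable_const).imp ?_
    exact measurableSet_eq_fun ((D.measurable_w.comp measurable_fst).mul
      h.isAdmissible.continuous_g_U.measurable) measurable_const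
  rw [Measure.volume_eq_prod, Measure.ae_prod_iff_ae_ae hmeas]
  refine ae_of_all _ fun ξ => ?_
  filter_upwards [ae_hasDerivAt_eq_zero_of_eq_zero (h.hasDerivAt_strain ξ)] with t ht hS
  exact (div_eq_zero_iff.1 (ht hS)).resolve_right D.p_pos.ne'

/- Where the strain vanishes the left side is `0`, and so is the right side at almost every such
time, since there the time derivative `w g(U) / p` of the strain vanishes too. -/
lemma lengthDensity_mul_weakIntegrand_ae_eq (h : D.IsFlow A) (φ : ℝ × ℝ → ℝ) :
    (fun q : ℝ × ℝ => D.lengthDensity A q.1 q.2 * D.weakIntegrand A φ (D.flowMap A q))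
      =ᵐ[volume] fun q => -D.fluxRate A φ q.1 q.2 := by
  filter_upwards [h.ae_label_X_prod, h.ae_w_mul_g_eq_zero] with ⟨ξ, t⟩ hlabel hw
  simp only [weakIntegrand, flowMap, fluxRate, h.u_X]
  rcases eq_or_ne (D.strain A ξ t) 0 with h0 | h0
  · simp only [lengthDensity, slopeDensity, h0, oddPow, abs_zero, zero_rpow D.p_pos.ne']
    linear_combination ((1 - 1 / D.p) * D.w ξ * 0 ^ (D.p - 2) * φ (D.X A ξ t, t)) * hw h0
  · rw [slope, hlabel h0, lengthDensity, slopeDensity]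
    linear_combination
      (-(pt φ (D.X A ξ t, t) + D.F (D.U A ξ t) * px φ (D.X A ξ t, t))) *
        abs_rpow_mul_div D.p (D.w ξ) (D.strain A ξ t)
      + ((1 / D.p - 1) * D.g (D.U A ξ t) * φ (D.X A ξ t, t)) *
        abs_rpow_mul_div_sq D.p (D.w ξ) h0

lemma measurable_weakIntegrand (h : D.IsFlow A) (hφ : ContDiff ℝ 1 φ) :
    Measurable (D.weakIntegrand A φ) := by
  have hslope := h.measurable_slope
  have hF : Measurable fun q : ℝ × ℝ => D.F (D.u A q.1 q.2) :=
    (D.continuous_F.comp h.continuous_u).measurable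
  have hg : Measurable fun q : ℝ × ℝ => D.g (D.u A q.1 q.2) :=
    (D.lipschitz_g.continuous.comp h.continuous_u).measurable
  have hpx := (continuous_px hφ).measurable
  have hpt := (continuous_pt hφ).measurable
  have hφm := hφ.continuous.measurable
  unfold weakIntegrand
  fun_prop

lemma locallyIntegrable_slopeDensity (h : D.IsFlow A) :
    LocallyIntegrable fun q : ℝ × ℝ => D.slopeDensity A q.1 q.2 := by
  have hp : 0 ≤ D.p - 1 := by linarith [D.two_le_p]
  refine locallyIntegrable_of_abs_le_mul h.isAdmissible.measurable_slopeDensity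
    D.intervalIntegrable_weight (D.continuous_growth_rpow hp) fun q => ?_
  rw [mul_comm]
  exact h.isAdmissible.abs_slopeDensity_le q.1 q.2

lemma locallyIntegrable_sq_mul_abs_strain_rpow (h : D.IsFlow A) :
    LocallyIntegrable fun q : ℝ × ℝ => D.w q.1 ^ 2 * |D.strain A q.1 q.2| ^ (D.p - 2) := by
  have hp : 0 ≤ D.p - 2 := by linarith [D.two_le_p]
  refine locallyIntegrable_of_abs_le_mul
    (((D.measurable_w.comp measurable_fst).pow_const 2).mul
      ((continuous_abs_rpow hp).measurable.comp h.isAdmissible.measurable_strain))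
    D.intervalIntegrable_weight (D.continuous_growth_rpow hp) fun q => ?_
  have hw : |D.w q.1| ≤ 1 + |D.w q.1| := by linarith
  have hS := D.abs_rpow_le_weight q.1 (D.growth_pos q.2).le hp
    (h.isAdmissible.abs_strain_le q.1 q.2)
  have hweight : (1 + |D.w q.1|) ^ 2 * (1 + |D.w q.1|) ^ (D.p - 2) = (1 + |D.w q.1|) ^ D.p := by
    rw [← rpow_natCast, ← rpow_add (by positivity)]
    norm_num
  rw [abs_of_nonneg (by positivity), ← sq_abs]
  calc |D.w q.1| ^ 2 * |D.strain A q.1 q.2| ^ (D.p - 2)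
      ≤ (1 + |D.w q.1|) ^ 2 * (D.growth q.2 ^ (D.p - 2) * (1 + |D.w q.1|) ^ (D.p - 2)) := by
        gcongr
    _ = (1 + |D.w q.1|) ^ D.p * D.growth q.2 ^ (D.p - 2) := by rw [← hweight]; ring

lemma hasCompactSupport_of_comp_flowMap (h : D.IsFlow A) (hc : HasCompactSupport φ)
    {ψ : ℝ × ℝ → ℝ} (hψ : ∀ q, D.flowMap A q ∉ tsupport φ → ψ q = 0) : HasCompactSupport ψ :=
  HasCompactSupport.intro (h.isProperMap_flowMap.isCompact_preimage hc) hψ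

lemma integrable_fluxRate (h : D.IsFlow A) (hφ : ContDiff ℝ 1 φ) (hc : HasCompactSupport φ) :
    Integrable fun q : ℝ × ℝ => D.fluxRate A φ q.1 q.2 := by
  have hflow := h.isProperMap_flowMap.continuous
  have hF : Continuous fun q : ℝ × ℝ => D.F (D.U A q.1 q.2) :=
    D.continuous_F.comp h.isAdmissible.continuous_U
  have hsource :=
    h.locallyIntegrable_sq_mul_abs_strain_rpow.integrable_smul_left_of_hasCompactSupport
      (g := fun q => (1 - 1 / D.p) * D.g (D.U A q.1 q.2) * φ (D.flowMap A q))
    ((h.isAdmissible.continuous_g_U.const_mul _).mul (hφ.continuous.comp hflow))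
    (h.hasCompactSupport_of_comp_flowMap hc fun q hq => by
      rw [image_eq_zero_of_notMem_tsupport hq, mul_zero])
  have htransport := h.locallyIntegrable_slopeDensity.integrable_smul_left_of_hasCompactSupport
    (g := fun q => pt φ (D.flowMap A q) + D.F (D.U A q.1 q.2) * px φ (D.flowMap A q))
    (((continuous_pt hφ).comp hflow).add (hF.mul ((continuous_px hφ).comp hflow)))
    (h.hasCompactSupport_of_comp_flowMap hc fun q hq => by
      rw [pt_of_notMem_tsupport hq, px_of_notMem_tsupport hq, mul_zero, add_zero])
  refine (hsource.add htransport).congr (ae_of_all _ fun q => ?_)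
  simp only [Pi.add_apply, smul_eq_mul, fluxRate, flowMap]
  ring

lemma integral_fluxRate (h : D.IsFlow A) (hφ : ContDiff ℝ 1 φ) (hc : HasCompactSupport φ) :
    ∫ q : ℝ × ℝ, D.fluxRate A φ q.1 q.2 = 0 := by
  have hint := h.integrable_fluxRate hφ hc
  rw [Measure.volume_eq_prod] at hint ⊢
  rw [integral_prod _ hint]
  refine integral_eq_zero_of_ae ?_
  filter_upwards [hint.prod_right_ae] with ξ hξ
  refine integral_eq_zero_of_hasDerivAt_of_integrable (h.hasDerivAt_slopeDensity_mul hφ ξ) hξ ?_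
  have hcont : Continuous fun t => D.slopeDensity A ξ t * φ (D.X A ξ t, t) :=
    continuous_iff_continuousAt.2 fun t => (h.hasDerivAt_slopeDensity_mul hφ ξ t).continuousAt
  refine hcont.integrable_of_hasCompactSupport (HasCompactSupport.mul_left ?_)
  exact HasCompactSupport.of_support_subset_isCompact (hc.image continuous_snd)
    fun t ht => ⟨_, subset_tsupport φ ht, rfl⟩

lemma integrable_weakIntegrand (h : D.IsFlow A) (hφ : ContDiff ℝ 1 φ)
    (hc : HasCompactSupport φ) : Integrable (D.weakIntegrand A φ) := by
  rw [← h.map_flowMap, integrable_map_measure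
      (h.measurable_weakIntegrand hφ).aestronglyMeasurable
      h.isProperMap_flowMap.continuous.measurable.aemeasurable,
    integrable_withDensity_iff_integrable_smul'
      h.isAdmissible.measurable_lengthDensity.ennreal_ofReal
      (ae_of_all _ fun _ => ENNReal.ofReal_lt_top)]
  simp only [ENNReal.toReal_ofReal (lengthDensity_nonneg _ _), smul_eq_mul, Function.comp_apply]
  exact (integrable_congr (h.lengthDensity_mul_weakIntegrand_ae_eq φ)).2
    (h.integrable_fluxRate hφ hc).neg

lemma integral_weakIntegrand (h : D.IsFlow A) (hφ : ContDiff ℝ 1 φ) (hc : HasCompactSupport φ) :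
    ∫ q, D.weakIntegrand A φ q = 0 := by
  rw [← h.map_flowMap, integral_map h.isProperMap_flowMap.continuous.measurable.aemeasurable
      (h.measurable_weakIntegrand hφ).aestronglyMeasurable,
    integral_withDensity_eq_integral_toReal_smul
      h.isAdmissible.measurable_lengthDensity.ennreal_ofReal
      (ae_of_all _ fun _ => ENNReal.ofReal_lt_top)]
  simp only [ENNReal.toReal_ofReal (lengthDensity_nonneg _ _), smul_eq_mul]
  rw [integral_congr_ae (h.lengthDensity_mul_weakIntegrand_ae_eq φ), integral_neg,
    h.integral_fluxRate hφ hc, neg_zero]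

lemma setIntegral_weakIntegrand (h : D.IsFlow A) (hφ : ContDiff ℝ 1 φ)
    (hc : HasCompactSupport φ) {s : Set (ℝ × ℝ)} (hs : tsupport φ ⊆ s) :
    ∫ q in s, D.weakIntegrand A φ q = 0 := by
  rw [setIntegral_eq_integral_of_forall_compl_eq_zero fun q hq => ?_,
    h.integral_weakIntegrand hφ hc]
  have hq' : q ∉ tsupport φ := fun hmem => hq (hs hmem)
  rw [weakIntegrand, image_eq_zero_of_notMem_tsupport hq', pt_of_notMem_tsupport hq',
    px_of_notMem_tsupport hq']
  ring

end IsFlow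

end LagrangianData

/-! ### Existence for given initial slopes -/

lemma integrable_one_add_abs_rpow {α : Type*} {mα : MeasurableSpace α} {μ : Measure α}
    [IsFiniteMeasure μ] {p : ℝ} (hp : 0 < p) {v : α → ℝ} (hv : AEStronglyMeasurable v μ)
    (hint : Integrable (fun x => |v x| ^ p) μ) : Integrable (fun x => (1 + |v x|) ^ p) μ := by
  have hp0 : ENNReal.ofReal p ≠ 0 := by simpa using hp
  have hmem : MemLp v (ENNReal.ofReal p) μ := by
    rw [← integrable_norm_rpow_iff hv hp0 ENNReal.ofReal_ne_top, ENNReal.toReal_ofReal hp.le]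
    exact hint
  have := ((memLp_const (1 : ℝ)).add hmem.norm).integrable_norm_rpow hp0 ENNReal.ofReal_ne_top
  rw [ENNReal.toReal_ofReal hp.le] at this
  refine this.congr (ae_of_all _ fun x => ?_)
  change ‖1 + |v x|‖ ^ p = _
  rw [Real.norm_of_nonneg (by positivity)]

lemma aestronglyMeasurable_Ioi_of_intervalIntegrable {g₀ : ℝ → ℝ}
    (hint : ∀ b : ℝ, 0 < b → IntervalIntegrable g₀ volume 0 b) :
    AEStronglyMeasurable g₀ (volume.restrict (Ioi 0)) := by
  refine LocallyIntegrableOn.aestronglyMeasurable fun x (hx : 0 < x) => ⟨Ioc 0 (x + 1), ?_, ?_⟩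
  · exact mem_nhdsWithin_of_mem_nhds (Ioc_mem_nhds hx (lt_add_one x))
  · exact (hint (x + 1) (by linarith)).1

lemma exists_isInitialSlope {p : ℝ} (hp : 0 < p) {g₀ : ℝ → ℝ}
    (hint : ∀ b : ℝ, 0 < b → IntervalIntegrable g₀ volume 0 b)
    (hpow : ∀ b : ℝ, 0 < b → IntegrableOn (fun x => |g₀ x| ^ p) (Icc 0 b)) :
    ∃ v, IsInitialSlope p v ∧ ∀ x, 0 ≤ x → ∫ y in (0 : ℝ)..x, v y = ∫ y in (0 : ℝ)..x, g₀ y := by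
  have hmeas := aestronglyMeasurable_Ioi_of_intervalIntegrable hint
  let v : ℝ → ℝ := (Ioi (0 : ℝ)).indicator (hmeas.mk g₀)
  have hv : Measurable v := hmeas.stronglyMeasurable_mk.measurable.indicator measurableSet_Ioi
  have hv0 : ∀ x ≤ 0, v x = 0 := fun x hx => indicator_of_notMem (not_lt.2 hx) _
  have hae : ∀ᵐ x, 0 < x → v x = g₀ x := by
    filter_upwards [(ae_restrict_iff' measurableSet_Ioi).1 hmeas.ae_eq_mk] with x hx hx0
    exact (indicator_of_mem (mem_Ioi.2 hx0) _).trans (hx hx0).symm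
  have hvpow : ∀ a b, IntegrableOn (fun x => |v x| ^ p) (Ioc a b) := fun a b => by
    have hpos : IntegrableOn (fun x => |v x| ^ p) (Ioc 0 (max b 1)) := by
      refine ((hpow (max b 1) (by positivity)).mono_set Ioc_subset_Icc_self).congr_fun_ae ?_
      filter_upwards [ae_restrict_of_ae hae, ae_restrict_mem measurableSet_Ioc] with x hx hx0
      rw [hx hx0.1]
    refine hpos.of_forall_sdiff_eq_zero measurableSet_Ioc fun x hx => ?_
    have hx0 : x ≤ 0 := not_lt.1 fun h => hx.2 ⟨h, le_max_of_le_left hx.1.2⟩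
    rw [hv0 x hx0, abs_zero, zero_rpow hp.ne']
  refine ⟨v, ⟨hv, hv0, fun a b => ⟨?_, ?_⟩⟩, fun x hx => intervalIntegral.integral_congr_ae ?_⟩
  · exact integrable_one_add_abs_rpow hp hv.aestronglyMeasurable (hvpow a b)
  · exact integrable_one_add_abs_rpow hp hv.aestronglyMeasurable (hvpow b a)
  · filter_upwards [hae] with y hy hyx
    exact hy (uIoc_of_le hx ▸ hyx).1

namespace IsInitialSlope

variable {p M : ℝ} {L : ℝ≥0} {F g v : ℝ → ℝ}

/-- The Lagrangian data in which each block `[k, k+1)` of labels is divided into `n k` cells, half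
material and half rarefaction, with initial slope `v`. -/
noncomputable def lagrangianData (h : IsInitialSlope p v) (hp : 2 ≤ p)
    (hF : ∀ a, HasDerivAt F (g a) a) (hM : ∀ a, |g a| ≤ M) (hL : LipschitzWith L g)
    (n : ℕ → ℕ+) : LagrangianData where
  p := p
  two_le_p := hp
  F := F
  g := g
  hasDerivAt_F := hF
  M := M
  abs_g_le := hM
  L := L
  lipschitz_g := hL
  s₀ := initialStrain n
  measurable_s₀ := measurable_initialStrain n
  s₀_nonneg := initialStrain_nonneg n
  s₀_le_one := initialStrain_le_one n
  w := initialWeight n v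
  measurable_w := h.measurable_initialWeight n
  intervalIntegrable_weight := h.intervalIntegrable_initialWeight n

variable (h : IsInitialSlope p v) {hp : 2 ≤ p} {hF : ∀ a, HasDerivAt F (g a) a}
  {hM : ∀ a, |g a| ≤ M} {hL : LipschitzWith L g} {n : ℕ → ℕ+} {A : ℝ → ℝ → ℝ}

lemma abs_sub_add_halfCell_le {k : ℕ} {ε ξ t : ℝ}
    (hA : (h.lagrangianData hp hF hM hL n).IsAdmissible A)
    (hfix : (h.lagrangianData hp hF hM hL n).picard A = A) (hcell : CellMassLE p v n k ε)
    (ht : |t| ≤ k) (hξ : ξ ∈ Ico (k : ℝ) (k + 1) ∩ materialLabels n) :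
    |A ξ t - A (ξ + halfCell n k) t| ≤ L * (1 + M * k) ^ (p - 1) * k * ε := by
  have hM0 : 0 ≤ M := (abs_nonneg _).trans (hM 0)
  have hp1 : 0 ≤ p - 1 := by linarith
  have hmass : |(h.lagrangianData hp hF hM hL n).modulus ξ
      - (h.lagrangianData hp hF hM hL n).modulus (ξ + halfCell n k)| ≤ ε := by
    rw [abs_sub_comm, LagrangianData.modulus_sub, abs_of_nonneg]
    · exact h.integral_halfCell_weight_le hcell hξ
    · exact intervalIntegral.integral_nonneg (by linarith [halfCell_pos n k])
        fun y _ => by positivity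
  have hlabel := hA.abs_picard_sub_label_le ξ (ξ + halfCell n k) t
  rw [hfix] at hlabel
  refine hlabel.trans ?_
  change L * (1 + M * |t|) ^ (p - 1) * |t| * _ ≤ _
  gcongr

lemma four_inv_rpow_le_X_add_one_sub {k : ℕ} {ε t : ℝ}
    (hA : (h.lagrangianData hp hF hM hL n).IsAdmissible A)
    (hfix : (h.lagrangianData hp hF hM hL n).picard A = A) (hcell : CellMassLE p v n k ε)
    (hε : 0 ≤ ε) (ht : |t| ≤ k)
    (hsmall : L * (1 + M * k) ^ (p - 1) * k * ε / p * ∫ x in (0 : ℝ)..k + 1, (1 + |v x|) ^ p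
      ≤ 4⁻¹) :
    (4⁻¹ : ℝ) ^ p ≤ (h.lagrangianData hp hF hM hL n).X A (k + 1) t
      - (h.lagrangianData hp hF hM hL n).X A k t := by
  have hM0 : 0 ≤ M := (abs_nonneg _).trans (hM 0)
  rw [hA.X_sub]
  refine h.four_inv_rpow_le_integral_strain (by linarith) (B := fun ξ => A ξ t / p)
    ((hA.continuous.comp (Continuous.prodMk_left t)).measurable.div_const p)
    (fun ξ => congrArg (initialStrain n ξ + ·) (mul_div_assoc _ _ _)) (by positivity)
    (fun ξ hξ => ?_) hsmall (hA.intervalIntegrable_lengthDensity t k (k + 1))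
  rw [← sub_div, abs_div, abs_of_pos (by linarith : 0 < p)]
  gcongr
  exact h.abs_sub_add_halfCell_le hA hfix hcell ht hξ

/- The cells of the `k`-th block are so fine that, for `|t| ≤ k`, the values of `A` at a material
label and at its rarefaction copy are too close for both strains to be small. -/
lemma exists_isFlow (hp : 2 ≤ p) (hF : ∀ a, HasDerivAt F (g a) a) (hM : ∀ a, |g a| ≤ M)
    (hL : LipschitzWith L g) : ∃ n A, (h.lagrangianData hp hF hM hL n).IsFlow A := by
  have hM0 : 0 ≤ M := (abs_nonneg _).trans (hM 0)
  let mass : ℕ → ℝ := fun k => ∫ x in (0 : ℝ)..k + 1, (1 + |v x|) ^ p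
  have hmass : ∀ k, 0 ≤ mass k := fun k =>
    intervalIntegral.integral_nonneg (by positivity) fun x _ => by positivity
  let C : ℕ → ℝ := fun k => L * (1 + M * k) ^ (p - 1) * k / p
  have hC : ∀ k, 0 ≤ C k := fun k => div_nonneg (by positivity) (by linarith)
  let ε : ℕ → ℝ := fun k => (4 * (C k * mass k + 1))⁻¹
  have hε : ∀ k, 0 < ε k := fun k => by
    have := mul_nonneg (hC k) (hmass k)
    positivity
  have hsmall : ∀ k : ℕ, L * (1 + M * k) ^ (p - 1) * k * ε k / p * mass k ≤ 4⁻¹ := fun k => by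
    have hCmass := mul_nonneg (hC k) (hmass k)
    calc L * (1 + M * k) ^ (p - 1) * k * ε k / p * mass k = C k * mass k * ε k := by ring
      _ ≤ (C k * mass k + 1) * ε k := by gcongr; linarith
      _ = 4⁻¹ := by simp only [ε]; field_simp
  obtain ⟨n, hn⟩ := h.exists_cellMassLE hε
  obtain ⟨A, hA, hfix⟩ := (h.lagrangianData hp hF hM hL n).exists_picard_eq_self
  refine ⟨n, A, hA, hfix, fun ξ => initialStrain_of_neg n, fun ξ => h.initialWeight_of_neg n,
    fun t => tendsto_atTop_of_add_le_add_one (fun a b hab => ?_) (c := 4⁻¹ ^ p) (by positivity) ?_⟩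
  · rw [← sub_nonneg, hA.X_sub]
    exact intervalIntegral.integral_nonneg hab fun ξ _ => LagrangianData.lengthDensity_nonneg ξ t
  · filter_upwards [eventually_ge_atTop ⌈|t|⌉₊] with k hk
    have := h.four_inv_rpow_le_X_add_one_sub hA hfix (hn k) (hε k).le (Nat.ceil_le.1 hk) (hsmall k)
    linarith

lemma u_initial (hA : (h.lagrangianData hp hF hM hL n).IsFlow A) {x : ℝ} (hx : 0 ≤ x) :
    (h.lagrangianData hp hF hM hL n).u A x 0 = ∫ y in (0 : ℝ)..x, v y := by
  have hA0 : ∀ ξ, A ξ 0 = 0 := fun ξ => by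
    rw [← hA.picard_eq]
    exact intervalIntegral.integral_same
  have hstrain : ∀ ξ, (h.lagrangianData hp hF hM hL n).strain A ξ 0 = initialStrain n ξ :=
    fun ξ => by
      rw [LagrangianData.strain, hA0, mul_zero, zero_div, add_zero]
      rfl
  have hX : ∀ ξ, (h.lagrangianData hp hF hM hL n).X A ξ 0 = initialPosition n ξ := fun ξ => by
    rw [LagrangianData.X, initialPosition, mul_zero, zero_add]
    simp only [LagrangianData.lengthDensity, hstrain]
    exact intervalIntegral.integral_congr fun η _ =>
      abs_initialStrain_rpow n (zero_lt_two.trans_le hp).ne' η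
  have hlabel : 0 ≤ (h.lagrangianData hp hF hM hL n).label A x 0 :=
    hA.le_label_iff.2 (by rwa [hX, initialPosition_zero])
  rw [LagrangianData.u, LagrangianData.U]
  simp only [LagrangianData.slopeDensity, hstrain]
  refine (h.integral_initialWeight_mul_oddPow n hlabel p).trans ?_
  rw [← hX, hA.X_label]

end IsInitialSlope

/-! ### Weak solutions of the wave equation -/

/-- The integrand of the weak formulation of `u_{tx} + f'(u) u_{xx} + λ f''(u) (u_x)² = 0` against
`φ`, where `ux` stands for `u_x`. -/
noncomputable def weakForm (lam : ℝ) (f : ℝ → ℝ) (u ux : ℝ → ℝ → ℝ) (φ : ℝ × ℝ → ℝ)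
    (q : ℝ × ℝ) : ℝ :=
  -(ux q.1 q.2) * (pt φ q + deriv f (u q.1 q.2) * px φ q)
    + (lam - 1) * deriv (deriv f) (u q.1 q.2) * (ux q.1 q.2) ^ 2 * φ q

/-- `u`, with slope `ux`, is a weak solution on `[0,∞) × [0,∞)` with initial value `u₀`, boundary
value `0`, and slope locally in `L^{1/λ}`. The weak identity comes with the integrability of its
integrand, so that the integral is not a junk value. -/
structure IsWeakSolution (lam : ℝ) (f u₀ : ℝ → ℝ) (u ux : ℝ → ℝ → ℝ) : Prop where
  continuousOn : ContinuousOn (fun q : ℝ × ℝ => u q.1 q.2) (Ici 0 ×ˢ Ici 0)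
  boundary : ∀ t, 0 ≤ t → u 0 t = 0
  initial : ∀ x, 0 ≤ x → u x 0 = u₀ x
  intervalIntegrable : ∀ t, 0 ≤ t → ∀ b, 0 < b → IntervalIntegrable (fun y => ux y t) volume 0 b
  eq_integral : ∀ t, 0 ≤ t → ∀ x, 0 ≤ x → u x t = ∫ y in (0 : ℝ)..x, ux y t
  integrableOn_rpow : ∀ t, 0 ≤ t → ∀ b, 0 < b →
    IntegrableOn (fun x => |ux x t| ^ (1 / lam)) (Icc 0 b)
  holder : ∀ t, 0 ≤ t → ∀ b, 0 < b → ∃ C : ℝ, ∀ x₁ ∈ Icc 0 b, ∀ x₂ ∈ Icc 0 b,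
    |u x₁ t - u x₂ t| ≤ C * |x₁ - x₂| ^ (1 - lam)
  integrableOn_weakForm : ∀ φ, ContDiff ℝ 1 φ → HasCompactSupport φ →
    tsupport φ ⊆ Ioi 0 ×ˢ Ioi 0 → IntegrableOn (weakForm lam f u ux φ) (Ioi 0 ×ˢ Ioi 0)
  integral_weakForm : ∀ φ, ContDiff ℝ 1 φ → HasCompactSupport φ →
    tsupport φ ⊆ Ioi 0 ×ˢ Ioi 0 → ∫ q in Ioi 0 ×ˢ Ioi 0, weakForm lam f u ux φ q = 0

lemma LagrangianData.IsFlow.isWeakSolution {D : LagrangianData} {A : ℝ → ℝ → ℝ} (h : D.IsFlow A)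
    {lam : ℝ} (hlam : D.p = 1 / lam) {f u₀ : ℝ → ℝ} (hF : D.F = deriv f)
    (hg : D.g = deriv (deriv f)) (hf0 : 0 ≤ deriv f 0) (hu₀ : ∀ x, 0 ≤ x → D.u A x 0 = u₀ x) :
    IsWeakSolution lam f u₀ (D.u A) (D.slope A) := by
  have hlam' : 1 / D.p = lam := by rw [hlam, one_div_one_div]
  have hweak : weakForm lam f (D.u A) (D.slope A) = D.weakIntegrand A := by
    ext φ q
    rw [weakForm, weakIntegrand, hlam', hF, hg]
  have hzero : ∀ t, 0 ≤ t → D.u A 0 t = 0 := fun t => h.u_zero (hF ▸ hf0)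
  refine
    { continuousOn := h.continuous_u.continuousOn
      boundary := hzero
      initial := hu₀
      intervalIntegrable := fun t _ b _ => h.intervalIntegrable_slope t 0 b
      eq_integral := fun t ht x hx => by rw [h.integral_slope t hx, hzero t ht, sub_zero]
      integrableOn_rpow := fun t _ b _ => ?_
      holder := fun t _ b _ => hlam' ▸ h.exists_abs_u_sub_le t 0 b
      integrableOn_weakForm := fun φ hφ hc _ => ?_
      integral_weakForm := fun φ hφ hc hs => ?_ }
  · rw [integrableOn_Icc_iff_integrableOn_Ioc, ← hlam]
    exact h.integrableOn_abs_slope_rpow t 0 b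
  · exact hweak ▸ (h.integrable_weakIntegrand hφ hc).integrableOn
  · exact hweak ▸ h.setIntegral_weakIntegrand hφ hc hs

lemma hasDerivAt_deriv_of_contDiff_two {f : ℝ → ℝ} (hf : ContDiff ℝ 2 f) (a : ℝ) :
    HasDerivAt (deriv f) (deriv (deriv f) a) a :=
  (((contDiff_succ_iff_deriv (n := 1)).1 hf).2.2.differentiable one_ne_zero a).hasDerivAt

theorem stmt0_general (lam : ℝ) (hlam : 0 < lam ∧ lam ≤ 1 / 2)
    (f : ℝ → ℝ) (hf : ContDiff ℝ 2 f) (hf0 : 0 ≤ deriv f 0)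
    (hfLip : ∃ L : ℝ, ∀ a b : ℝ, |deriv (deriv f) a - deriv (deriv f) b| ≤ L * |a - b|)
    (hfbd : ∃ M : ℝ, ∀ a : ℝ, |deriv (deriv f) a| ≤ M)
    (u₀ g₀ : ℝ → ℝ)
    (hg₀int : ∀ b : ℝ, 0 < b → IntervalIntegrable g₀ volume 0 b)
    (hu₀AC : ∀ x : ℝ, 0 ≤ x → u₀ x = ∫ y in (0 : ℝ)..x, g₀ y)
    (hu₀W : ∀ b : ℝ, 0 < b → IntegrableOn (fun x => |g₀ x| ^ (1 / lam)) (Icc 0 b)) :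
    ∃ u ux : ℝ → ℝ → ℝ, IsWeakSolution lam f u₀ u ux := by
  obtain ⟨L, hL⟩ := hfLip
  obtain ⟨M, hM⟩ := hfbd
  have hp : 2 ≤ 1 / lam := by
    rw [le_div_iff₀ hlam.1]
    linarith [hlam.2]
  have hF := hasDerivAt_deriv_of_contDiff_two hf
  have hLip : LipschitzWith L.toNNReal (deriv (deriv f)) := .of_dist_le' hL
  obtain ⟨v, hv, hvg⟩ := exists_isInitialSlope (by linarith) hg₀int hu₀W
  obtain ⟨n, A, hA⟩ := hv.exists_isFlow hp hF hM hLip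
  refine ⟨_, _, hA.isWeakSolution rfl rfl rfl hf0 fun x hx => ?_⟩
  rw [hv.u_initial hA hx, hvg x hx, hu₀AC x hx]

/-- global existence of a weak solution of (E1)
`u_{tx} + f'(u) u_{xx} + λ f''(u) (u_x)² = 0` on `[0,∞) × [0,∞)` for
`λ ∈ (0,1/2]`, with boundary condition `u(0,t) = 0` and initial datum
`u₀ ∈ W^{1,1/λ}_loc` (represented by its locally integrable derivative `g₀`),
satisfying the compatibility condition `u₀(0) = 0`, `u₀'(0) = 0`.
The solution `u` is continuous, takes the initial and boundary data pointwise,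
is for each time locally absolutely continuous in `x` with derivative
`ux(·,t) ∈ L^{1/λ}_loc` (hence locally Hölder continuous with exponent `1−λ` in `x`),
and satisfies the weak formulation against all `C¹` test functions compactly
supported in `(0,∞) × (0,∞)`. -/
theorem stmt0 (lam : ℝ) (hlam : 0 < lam ∧ lam ≤ 1/2)
    (f : ℝ → ℝ) (hf : ContDiff ℝ 2 f) (hf0 : 0 ≤ deriv f 0)
    (hfLip : ∃ L : ℝ, ∀ a b : ℝ, |deriv (deriv f) a - deriv (deriv f) b| ≤ L * |a - b|)
    (hfbd : ∃ M : ℝ, ∀ a : ℝ, |deriv (deriv f) a| ≤ M)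
    (u₀ g₀ : ℝ → ℝ)
    (hu₀0 : u₀ 0 = 0)
    (hu₀'0 : HasDerivWithinAt u₀ 0 (Ici 0) 0)
    (hg₀int : ∀ b : ℝ, 0 < b → IntervalIntegrable g₀ volume 0 b)
    (hu₀AC : ∀ x : ℝ, 0 ≤ x → u₀ x = ∫ y in (0:ℝ)..x, g₀ y)
    (hu₀W : ∀ b : ℝ, 0 < b → IntegrableOn (fun x => |g₀ x| ^ (1/lam)) (Icc 0 b)) :
    ∃ u ux : ℝ → ℝ → ℝ,
      -- continuity of the solution
      ContinuousOn (fun p : ℝ × ℝ => u p.1 p.2) (Ici 0 ×ˢ Ici 0) ∧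
      -- boundary condition
      (∀ t : ℝ, 0 ≤ t → u 0 t = 0) ∧
      -- initial condition
      (∀ x : ℝ, 0 ≤ x → u x 0 = u₀ x) ∧
      -- for each time, u(·,t) is locally absolutely continuous with derivative
      -- ux(·,t), and lies in W^{1,1/λ}_loc; hence it is locally Hölder
      -- continuous with exponent 1−λ
      (∀ t : ℝ, 0 ≤ t →
        (∀ b : ℝ, 0 < b → IntervalIntegrable (fun y => ux y t) volume 0 b) ∧
        (∀ x : ℝ, 0 ≤ x → u x t = ∫ y in (0:ℝ)..x, ux y t) ∧
        (∀ b : ℝ, 0 < b → IntegrableOn (fun x => |ux x t| ^ (1/lam)) (Icc 0 b)) ∧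
        (∀ b : ℝ, 0 < b → ∃ C : ℝ, ∀ x₁ ∈ Icc (0:ℝ) b, ∀ x₂ ∈ Icc (0:ℝ) b,
          |u x₁ t - u x₂ t| ≤ C * |x₁ - x₂| ^ (1 - lam))) ∧
      -- the weak formulation of (E1)
      (∀ φ : ℝ × ℝ → ℝ, ContDiff ℝ 1 φ → HasCompactSupport φ →
        tsupport φ ⊆ Ioi 0 ×ˢ Ioi 0 →
        ∫ p in (Ioi (0:ℝ) ×ˢ Ioi (0:ℝ)),
          (-(ux p.1 p.2) * (pt φ p + deriv f (u p.1 p.2) * px φ p)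
            + (lam - 1) * deriv (deriv f) (u p.1 p.2) * (ux p.1 p.2) ^ 2 * φ p) = 0) := by
  obtain ⟨u, ux, h⟩ := stmt0_general lam hlam f hf hf0 hfLip hfbd u₀ g₀ hg₀int hu₀AC hu₀W
  exact ⟨u, ux, h.continuousOn, h.boundary, h.initial, fun t ht => ⟨h.intervalIntegrable t ht,
    h.eq_integral t ht, h.integrableOn_rpow t ht, h.holder t ht⟩, h.integral_weakForm⟩
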